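/- arXiv:2309.15404 — 3 statements merged into one kernel-verified Lean document; each statement's English description precedes it below -/
import Mathlib

section
/- Let A = ⊕_{i≥0} A_i be a finitely generated graded k-algebra of Krull dimension r which is an integral domain, and suppose A is saturated, i.e. dim_k A_i ≠ 0 for all sufficiently large i. Then dim_k A_i = Vol(A)·i^{r-1}/(r-1)! + O(i^{r-2}) as i → ∞, where Vol(A) := lim_{t→1} (1-t)^r H_A(t). -/
open Filter Asymptotics

theorem MvPolynomial.isIntegral_of_isHomogeneous {k R σ : Type*} [Field k] [CommRing R]
    [Algebra k R] {F : MvPolynomial σ k} {m : ℕ} (hF : F.IsHomogeneous m) (B : Subalgebra k R)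
    (w : σ → R) (hw : ∀ i, w i ∈ B) (a : σ → k) (ha : MvPolynomial.eval a F ≠ 0) (y : R)
    (h : MvPolynomial.aeval (fun i => w i + a i • y) F = 0) : IsIntegral B y := by
  let L : σ → Polynomial B := fun i =>
    Polynomial.C ⟨w i, hw i⟩ + Polynomial.C (algebraMap k B (a i)) * Polynomial.X
  have hL (e : σ →₀ ℕ) : (e.prod fun i n => L i ^ n).natDegree ≤ e.degree ∧
      (e.prod fun i n => L i ^ n).coeff e.degree = algebraMap k B (e.prod fun i n => a i ^ n) := by
    induction e using Finsupp.induction_linear with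
    | zero => simp
    | add f g hf hg =>
      rw [Finsupp.prod_add_index' (by simp) (by intros; rw [pow_add]),
        Finsupp.prod_add_index' (by simp) (by intros; rw [pow_add]), map_add, map_mul]
      exact ⟨Polynomial.natDegree_mul_le.trans (add_le_add hf.1 hg.1), by
        rw [Polynomial.coeff_mul_add_eq_of_natDegree_le hf.1 hg.1, hf.2, hg.2]⟩
    | single i n =>
      have h1 : (L i).natDegree ≤ 1 := by
        dsimp only [L]; compute_degree
      have h2 : (L i).coeff 1 = algebraMap k B (a i) := by
        simp [L, Polynomial.coeff_C]
      simp only [pow_zero, Finsupp.prod_single_index, Finsupp.degree_single, map_pow]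
      refine ⟨(Polynomial.natDegree_pow_le_of_le n h1).trans (by simp), ?_⟩
      have := Polynomial.coeff_pow_of_natDegree_le (m := n) h1
      rwa [mul_one, h2] at this
  let G : Polynomial B := MvPolynomial.aeval L F
  have hG : G = ∑ e ∈ F.support, algebraMap k _ (F.coeff e) * e.prod fun i n => L i ^ n := by
    simp only [G, MvPolynomial.aeval_def, MvPolynomial.eval₂_eq, Finsupp.prod]
  have hdeg (e) (he : e ∈ F.support) : e.degree = m := by
    rw [Finsupp.degree_eq_weight_one]
    exact hF (MvPolynomial.mem_support_iff.mp he)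
  have hG1 : G.natDegree ≤ m := by
    rw [hG]
    refine Polynomial.natDegree_sum_le_of_forall_le _ _ fun e he => ?_
    rw [← hdeg e he, Polynomial.algebraMap_apply]
    exact (Polynomial.natDegree_C_mul_le _ _).trans (hL e).1
  have hG2 : G.coeff m = algebraMap k B (MvPolynomial.eval a F) := by
    rw [hG, Polynomial.finsetSum_coeff, MvPolynomial.eval_eq, map_sum]
    refine Finset.sum_congr rfl fun e he => ?_
    rw [← hdeg e he, Polynomial.algebraMap_apply, Polynomial.coeff_C_mul, (hL e).2, map_mul]
    rfl
  have hG3 : Polynomial.aeval y G = 0 := by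
    rw [← h]
    have : ((Polynomial.aeval (R := B) y).restrictScalars k).comp (MvPolynomial.aeval L) =
        MvPolynomial.aeval (fun i => w i + a i • y) := by
      ext i
      simp [L, Algebra.smul_def]
    exact DFunLike.congr_fun this F
  refine ⟨Polynomial.C (algebraMap k B (MvPolynomial.eval a F)⁻¹) * G, ?_, ?_⟩
  · refine Polynomial.monic_of_natDegree_le_of_coeff_eq_one m
      ((Polynomial.natDegree_C_mul_le _ _).trans hG1) ?_
    rw [Polynomial.coeff_C_mul, hG2, ← map_mul, inv_mul_cancel₀ ha, map_one]
  · rw [← Polynomial.aeval_def, map_mul, hG3, mul_zero]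

section Graded

variable {k R σ : Type*} [Field k] [CommRing R] [Algebra k R] (𝒜 : ℕ → Submodule k R)
  [GradedAlgebra 𝒜]

theorem MvPolynomial.IsHomogeneous.aeval_mem_graded {z : σ → R} {d : ℕ} (hz : ∀ i, z i ∈ 𝒜 d)
    {F : MvPolynomial σ k} {m : ℕ} (hF : F.IsHomogeneous m) :
    MvPolynomial.aeval z F ∈ 𝒜 (m * d) := by
  rw [MvPolynomial.aeval_def, MvPolynomial.eval₂_eq]
  refine Submodule.sum_mem _ fun e he => ?_
  rw [← Algebra.smul_def]
  refine Submodule.smul_mem _ _ ?_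
  have h := SetLike.prod_pow_mem_graded 𝒜 (fun _ => d) z e (F := e.support) fun i _ => hz i
  have : ∑ i ∈ e.support, e i • d = m * d := by
    have hm : e.degree = m := by
      rw [Finsupp.degree_eq_weight_one]
      exact hF (MvPolynomial.mem_support_iff.mp he)
    rw [← hm, Finsupp.degree_apply, Finset.sum_mul]
    rfl
  rwa [this] at h

theorem DirectSum.decompose_aeval {z : σ → R} {d : ℕ} (hd : 0 < d) (hz : ∀ i, z i ∈ 𝒜 d)
    (F : MvPolynomial σ k) (m : ℕ) :
    (DirectSum.decompose 𝒜 (MvPolynomial.aeval z F) (m * d) : R) =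
      MvPolynomial.aeval z (MvPolynomial.homogeneousComponent m F) := by
  conv_lhs => rw [← MvPolynomial.sum_homogeneousComponent F]
  rw [map_sum, DirectSum.decompose_sum, DFinsupp.finsetSum_apply, AddSubmonoidClass.coe_finsetSum]
  have h (i) := (MvPolynomial.homogeneousComponent_isHomogeneous i F).aeval_mem_graded 𝒜 hz
  rw [Finset.sum_eq_single m]
  · exact DirectSum.decompose_of_mem_same 𝒜 (h m)
  · intro i _ hi
    exact DirectSum.decompose_of_mem_ne 𝒜 (h i) fun h => hi (Nat.eq_of_mul_eq_mul_right hd h)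
  · intro hm
    rw [MvPolynomial.homogeneousComponent_eq_zero, map_zero, DirectSum.decompose_zero]
    · rfl
    · simpa using hm

end Graded

theorem Algebra.isIntegral_of_adjoin_le {k R : Type*} [CommRing k] [CommRing R] [Algebra k R]
    (B : Subalgebra k R) (Z : Set R) (hZ : ∀ z ∈ Z, IsIntegral B z) {x : R}
    (hx : IsIntegral (Algebra.adjoin k Z) x) : IsIntegral B x := by
  have hle : Algebra.adjoin k Z ≤ (integralClosure B R).restrictScalars k :=
    Algebra.adjoin_le hZ
  have : IsIntegral (integralClosure B R) x := by
    obtain ⟨p, hp, h⟩ := hx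
    let φ : Algebra.adjoin k Z →+* integralClosure B R := (Subalgebra.inclusion hle).toRingHom
    exact ⟨p.map φ, hp.map _, (Polynomial.eval₂_map φ _ x).trans h⟩
  exact isIntegral_trans x this

section NoetherNormalization

variable {k R : Type*} [Field k] [CommRing R] [Algebra k R] (𝒜 : ℕ → Submodule k R)
  [GradedAlgebra 𝒜]

theorem exists_finset_homogeneous_isIntegral [Algebra.FiniteType k R]
    (h0 : Module.Finite k (𝒜 0)) :
    ∃ (d : ℕ) (Z : Finset R), 0 < d ∧ (∀ z ∈ Z, z ∈ 𝒜 d) ∧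
      ∀ x : R, IsIntegral (Algebra.adjoin k (Z : Set R)) x := by
  classical
  obtain ⟨S, hS⟩ := (inferInstance : Algebra.FiniteType k R).out
  let T : Finset (ℕ × R) := S.biUnion fun x =>
    (DirectSum.decompose 𝒜 x).support.image fun i => (i, (DirectSum.decompose 𝒜 x i : R))
  have hT (t) (ht : t ∈ T) : t.2 ∈ 𝒜 t.1 := by
    simp only [T, Finset.mem_biUnion, Finset.mem_image] at ht
    obtain ⟨x, -, i, -, rfl⟩ := ht
    exact SetLike.coe_mem _
  let T' := T.filter fun t => t.1 ≠ 0
  let d := ∏ t ∈ T', t.1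
  have hd : 0 < d := Finset.prod_pos fun t ht => Nat.pos_of_ne_zero (Finset.mem_filter.mp ht).2
  let Z := T'.image fun t => t.2 ^ (d / t.1)
  refine ⟨d, Z, hd, ?_, fun x => ?_⟩
  · intro z hz
    obtain ⟨t, ht, rfl⟩ := Finset.mem_image.mp hz
    have := SetLike.pow_mem_graded (d / t.1) (hT t (Finset.mem_filter.mp ht).1)
    rwa [smul_eq_mul, Nat.div_mul_cancel (Finset.dvd_prod_of_mem _ ht)] at this
  · have hint (t) (ht : t ∈ T) : IsIntegral (Algebra.adjoin k (Z : Set R)) t.2 := by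
      by_cases h : t.1 = 0
      · have h2 := hT t ht
        rw [h] at h2
        have : IsIntegral k t.2 := by
          have : Module.Finite k (SetLike.GradeZero.subalgebra 𝒜) := h0
          have := (Algebra.IsIntegral.isIntegral (R := k) (A := SetLike.GradeZero.subalgebra 𝒜) ⟨t.2, h2⟩)
          exact this.map (SetLike.GradeZero.subalgebra 𝒜).val
        exact this.tower_top
      · have ht' : t ∈ T' := Finset.mem_filter.mpr ⟨ht, h⟩
        have hpos : 0 < d / t.1 := Nat.div_pos
          (Nat.le_of_dvd hd (Finset.dvd_prod_of_mem _ ht')) (Nat.pos_of_ne_zero h)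
        refine IsIntegral.of_pow hpos ?_
        exact isIntegral_algebraMap (R := Algebra.adjoin k (Z : Set R))
          (x := ⟨_, Algebra.subset_adjoin (Finset.mem_coe.mpr (Finset.mem_image_of_mem _ ht'))⟩)
    refine Algebra.isIntegral_of_adjoin_le _ (S : Set R) (fun s hs => ?_) ?_
    · rw [← DirectSum.sum_support_decompose 𝒜 s]
      refine IsIntegral.sum _ fun i hi => hint (i, _) ?_
      exact Finset.mem_biUnion.mpr ⟨s, hs, Finset.mem_image_of_mem _ hi⟩
    · rw [hS]
      exact isIntegral_algebraMap (R := (⊤ : Subalgebra k R)) (x := ⟨x, trivial⟩)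

theorem exists_finset_homogeneous_card_lt [Infinite k] [Nontrivial R] {d : ℕ} (hd : 0 < d)
    (Z : Finset R) (hZ : ∀ z ∈ Z, z ∈ 𝒜 d)
    (hint : ∀ x : R, IsIntegral (Algebra.adjoin k (Z : Set R)) x)
    (hdep : ¬ AlgebraicIndependent k ((↑) : Z → R)) :
    ∃ Z' : Finset R, Z'.card < Z.card ∧ (∀ z ∈ Z', z ∈ 𝒜 d) ∧
      ∀ x : R, IsIntegral (Algebra.adjoin k (Z' : Set R)) x := by
  classical
  rw [algebraicIndependent_iff] at hdep
  push Not at hdep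
  obtain ⟨F', hF', hne⟩ := hdep
  obtain ⟨m, hm⟩ : ∃ m, MvPolynomial.homogeneousComponent m F' ≠ 0 := by
    by_contra! h
    apply hne
    rw [← MvPolynomial.sum_homogeneousComponent F']
    exact Finset.sum_eq_zero fun i _ => h i
  set F := MvPolynomial.homogeneousComponent m F' with hFdef
  have hF : F.IsHomogeneous m := MvPolynomial.homogeneousComponent_isHomogeneous m F'
  have hF0 : MvPolynomial.aeval ((↑) : Z → R) F = 0 := by
    rw [hFdef, ← DirectSum.decompose_aeval 𝒜 hd (fun i : Z => hZ i i.2), hF', DirectSum.decompose_zero]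
    rfl
  obtain ⟨a, ha⟩ : ∃ a, MvPolynomial.eval a F ≠ 0 := by
    by_contra! h
    exact hm (MvPolynomial.funext fun x => by rw [h, map_zero])
  obtain ⟨i₀, hi₀⟩ : ∃ i, a i ≠ 0 := by
    by_contra! h
    obtain rfl : a = 0 := funext h
    rw [MvPolynomial.eval_zero] at ha
    have hm0 : m = 0 := by
      have := hF (d := 0) ha
      simpa using this.symm
    rw [hm0] at hF
    obtain ⟨c, hc⟩ : ∃ c, F = MvPolynomial.C c := ⟨_, MvPolynomial.totalDegree_eq_zero_iff_eq_C.mp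
      ((MvPolynomial.totalDegree_zero_iff_isHomogeneous _).mpr hF)⟩
    rw [hc, MvPolynomial.aeval_C, FaithfulSMul.algebraMap_eq_zero_iff] at hF0
    exact hm (by rw [hc, hF0, map_zero])
  let y : R := (a i₀)⁻¹ • (i₀ : R)
  let w : Z → R := fun i => i - a i • y
  have hw₀ : w i₀ = 0 := by simp [w, y, smul_smul, mul_inv_cancel₀ hi₀]
  let Z' := (Finset.univ.erase i₀).image w
  have hw (i) : w i ∈ Algebra.adjoin k (Z' : Set R) := by
    by_cases h : i = i₀
    · rw [h, hw₀]; exact zero_mem _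
    · exact Algebra.subset_adjoin (Finset.mem_coe.mpr
        (Finset.mem_image_of_mem _ (Finset.mem_erase.mpr ⟨h, Finset.mem_univ _⟩)))
  have hy : IsIntegral (Algebra.adjoin k (Z' : Set R)) y := by
    refine MvPolynomial.isIntegral_of_isHomogeneous hF _ w hw a ha y ?_
    rw [← hF0]
    congr 2
    ext i
    simp [w]
  refine ⟨Z', ?_, ?_, fun x => ?_⟩
  · refine Finset.card_image_le.trans_lt ?_
    rw [← Fintype.card_coe Z]
    exact Finset.card_erase_lt_of_mem (Finset.mem_univ i₀)
  · intro z hz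
    obtain ⟨i, -, rfl⟩ := Finset.mem_image.mp hz
    exact sub_mem (hZ i i.2) (Submodule.smul_mem _ _ (Submodule.smul_mem _ _ (hZ _ i₀.2)))
  · refine Algebra.isIntegral_of_adjoin_le _ (Z : Set R) (fun z hz => ?_) (hint x)
    have : z = w ⟨z, hz⟩ + a ⟨z, hz⟩ • y := by simp [w]
    rw [this]
    exact (isIntegral_algebraMap (R := Algebra.adjoin k (Z' : Set R)) (x := ⟨_, hw _⟩)).add
      (hy.smul _)

/-- Graded Noether normalization: a finitely generated graded algebra over an infinite field is
integral over a polynomial subalgebra generated by homogeneous elements of one positive degree. -/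
theorem exists_algebraicIndependent_homogeneous_isIntegral [Infinite k] [Nontrivial R]
    [Algebra.FiniteType k R] (h0 : Module.Finite k (𝒜 0)) :
    ∃ (d : ℕ) (Z : Finset R), 0 < d ∧ (∀ z ∈ Z, z ∈ 𝒜 d) ∧
      AlgebraicIndependent k ((↑) : Z → R) ∧
      ∀ x : R, IsIntegral (Algebra.adjoin k (Z : Set R)) x := by
  obtain ⟨d, Z, hd, hZ, hint⟩ := exists_finset_homogeneous_isIntegral 𝒜 h0
  induction h : Z.card using Nat.strong_induction_on generalizing Z with
  | _ n ih =>
    by_cases hdep : AlgebraicIndependent k ((↑) : Z → R)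
    · exact ⟨d, Z, hd, hZ, hdep, hint⟩
    · obtain ⟨Z', hlt, hZ', hint'⟩ := exists_finset_homogeneous_card_lt 𝒜 hd Z hZ hint hdep
      exact ih _ (h ▸ hlt) Z' hZ' hint' rfl

end NoetherNormalization

theorem MvPolynomial.finrank_homogeneousSubmodule {k σ : Type*} [Field k] [Fintype σ] {q : ℕ}
    (hq : Fintype.card σ = q + 1) (n : ℕ) :
    Module.finrank k (MvPolynomial.homogeneousSubmodule σ k n) = (n + q).choose q := by
  classical
  rw [MvPolynomial.homogeneousSubmodule_eq_finsupp_supported]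
  have hs : {d : σ →₀ ℕ | d.degree = n} = (Finset.univ.finsuppAntidiag n : Finset (σ →₀ ℕ)) := by
    ext e
    simp [Finset.mem_finsuppAntidiag, Finsupp.degree_eq_sum]
  rw [hs, (AddMonoidAlgebra.supportedEquivFinsupp _).finrank_eq, Module.finrank_finsupp_self,
    Fintype.card_eq_nat_card, Nat.card_coe_set_eq, Set.ncard_coe_finset, Finset.card_finsuppAntidiag_nat_eq_choose, Finset.card_univ, hq,
    show q + 1 + n - 1 = n + q by omega, Nat.choose_symm_add]

section Sandwich

variable {k R σ : Type*} [Field k] [CommRing R] [IsDomain R] [Algebra k R]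
  (𝒜 : ℕ → Submodule k R) [GradedAlgebra 𝒜]

theorem exists_finrank_sandwich [Fintype σ] {q : ℕ} (hq : Fintype.card σ = q + 1) {d : ℕ}
    (hd : 0 < d) (z : σ → R) (hz : ∀ i, z i ∈ 𝒜 d)
    (hinj : Function.Injective (MvPolynomial.aeval (R := k) z))
    (hfin : (MvPolynomial.aeval (R := k) z).Finite) (hA : ∀ i, Module.Finite k (𝒜 i)) :
    ∃ ρ M a : ℕ, ∀ m, ρ * (m + q).choose q ≤ Module.finrank k (𝒜 ((m + M) * d)) ∧
      Module.finrank k (𝒜 ((m + M) * d)) ≤ ρ * (m + a + q).choose q := by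
  classical
  set φ : MvPolynomial σ k →ₐ[k] R := MvPolynomial.aeval z
  let _ : Algebra (MvPolynomial σ k) R := φ.toRingHom.toAlgebra
  have hsmul (p : MvPolynomial σ k) (x : R) : p • x = φ p * x := rfl
  have : Module.Finite (MvPolynomial σ k) R := hfin
  have hN : (Submodule.span (MvPolynomial σ k) (⋃ m, (𝒜 (m * d) : Set R))).FG :=
    IsNoetherian.noetherian _
  obtain ⟨G, hG, hGspan⟩ := (Submodule.fg_span_iff_fg_span_finset_subset _).mp hN
  have hdeg (g : G) : ∃ m, (g : R) ∈ 𝒜 (m * d) := Set.mem_iUnion.mp (hG g.2)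
  choose deg hdeg using hdeg
  let M := Finset.univ.sup deg
  have hM (g) : deg g ≤ M := Finset.le_sup (Finset.mem_univ g)
  obtain ⟨i₀⟩ : Nonempty σ := Fintype.card_pos_iff.mp (by omega)
  let c (g : G) : MvPolynomial σ k := MvPolynomial.X i₀ ^ (M - deg g)
  have hc (g) : c g ≠ 0 := pow_ne_zero _ (MvPolynomial.X_ne_zero i₀)
  let v (g : G) : R := c g • (g : R)
  have hv (g) : v g ∈ 𝒜 (M * d) := by
    have h := SetLike.mul_mem_graded (SetLike.pow_mem_graded (M - deg g) (hz i₀)) (hdeg g)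
    rw [smul_eq_mul, ← add_mul, Nat.sub_add_cancel (hM g)] at h
    simpa [v, hsmul, c, φ] using h
  obtain ⟨s, hs, hmax⟩ := exists_maximal_linearIndepOn (MvPolynomial σ k) v
  have hex (g : G) : ∃ b : MvPolynomial σ k, b ≠ 0 ∧
      b • (g : R) ∈ Submodule.span (MvPolynomial σ k) (v '' s) := by
    by_cases h : g ∈ s
    · exact ⟨c g, hc g, Submodule.subset_span ⟨g, h, rfl⟩⟩
    · obtain ⟨b, hb, hb'⟩ := hmax g h
      exact ⟨b * c g, mul_ne_zero hb (hc g), by rwa [mul_smul]⟩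
  choose b hb hbs using hex
  let B := ∏ g, b g
  have hB : B ≠ 0 := Finset.prod_ne_zero_iff.mpr fun g _ => hb g
  have hBs (x : R) (hx : x ∈ Submodule.span (MvPolynomial σ k) (⋃ m, (𝒜 (m * d) : Set R))) :
      B • x ∈ Submodule.span (MvPolynomial σ k) (v '' s) := by
    rw [hGspan] at hx
    induction hx using Submodule.span_induction with
    | mem x hx =>
      obtain ⟨b', hb'⟩ := Finset.dvd_prod_of_mem b (Finset.mem_univ (⟨x, hx⟩ : G))
      have : B = b' * b ⟨x, hx⟩ := hb'.trans (mul_comm _ _)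
      rw [this, mul_smul]
      exact Submodule.smul_mem _ _ (hbs ⟨x, hx⟩)
    | zero => rw [smul_zero]; exact zero_mem _
    | add x y _ _ hx hy => rw [smul_add]; exact add_mem hx hy
    | smul p x _ hx => rw [smul_comm]; exact Submodule.smul_mem _ _ hx
  obtain ⟨a, ha⟩ : ∃ a, MvPolynomial.homogeneousComponent a B ≠ 0 := by
    by_contra! h
    apply hB
    rw [← MvPolynomial.sum_homogeneousComponent B]
    exact Finset.sum_eq_zero fun i _ => h i
  let Ψ (n : ℕ) : (s → MvPolynomial.homogeneousSubmodule σ k n) →ₗ[k] R :=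
    ∑ e : s, LinearMap.mulRight k (v e) ∘ₗ φ.toLinearMap ∘ₗ Submodule.subtype _ ∘ₗ
      LinearMap.proj e
  have hΨ (n p) : Ψ n p = ∑ e : s, φ (p e) * v e := by simp [Ψ]
  have hfinP (n : ℕ) : Module.Finite k (MvPolynomial.homogeneousSubmodule σ k n) :=
    Module.Finite.iff_fg.mpr (MvPolynomial.homogeneousSubmodule_fg σ k n)
  have hdim (n : ℕ) : Module.finrank k (s → MvPolynomial.homogeneousSubmodule σ k n) =
      Fintype.card s * (n + q).choose q := by
    rw [Module.finrank_pi_fintype, Finset.sum_const,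
      MvPolynomial.finrank_homogeneousSubmodule hq, Finset.card_univ, smul_eq_mul]
  refine ⟨Fintype.card s, M, a, fun m => ⟨?_, ?_⟩⟩
  · have hΨinj : Function.Injective (Ψ m) := by
      rw [injective_iff_map_eq_zero]
      intro p hp
      rw [hΨ] at hp
      have := Fintype.linearIndependent_iff.mp hs (fun e => (p e : MvPolynomial σ k)) hp
      exact funext fun e => Subtype.ext (this e)
    rw [← hdim, ← LinearMap.finrank_range_of_inj hΨinj]
    refine Submodule.finrank_mono ?_
    rintro _ ⟨p, rfl⟩
    rw [hΨ, add_mul]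
    exact Submodule.sum_mem _ fun e _ =>
      SetLike.mul_mem_graded ((p e).2.aeval_mem_graded 𝒜 hz) (hv e)
  · set β := MvPolynomial.homogeneousComponent a B with hβ
    have hβ0 : φ β ≠ 0 := fun h => ha (hinj (h.trans (map_zero _).symm))
    have hmul : Function.Injective (LinearMap.mulLeft k (φ β)) :=
      fun x y h => mul_left_cancel₀ hβ0 h
    rw [← hdim, (Submodule.equivMapOfInjective _ hmul (𝒜 ((m + M) * d))).finrank_eq]
    refine le_trans (Submodule.finrank_mono ?_) (LinearMap.finrank_range_le (Ψ (m + a)))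
    rintro _ ⟨x, hx, rfl⟩
    have hBx := hBs x (Submodule.subset_span (Set.mem_iUnion.mpr ⟨m + M, hx⟩))
    rw [Set.image_eq_range, Submodule.mem_span_range_iff_exists_fun] at hBx
    obtain ⟨p, hp⟩ := hBx
    refine ⟨fun e => ⟨_, MvPolynomial.homogeneousComponent_isHomogeneous (m + a) (p e)⟩, ?_⟩
    rw [hΨ, LinearMap.mulLeft_apply]
    have h1 : (DirectSum.decompose 𝒜 (B • x) (a * d + (m + M) * d) : R) = φ β * x := by
      rw [hsmul, DirectSum.coe_decompose_mul_add_of_right_mem 𝒜 hx,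
        DirectSum.decompose_aeval 𝒜 hd hz]
    rw [← h1, ← hp, DirectSum.decompose_sum, DFinsupp.finsetSum_apply,
      AddSubmonoidClass.coe_finsetSum]
    refine Finset.sum_congr rfl fun e _ => ?_
    rw [show a * d + (m + M) * d = (m + a) * d + M * d by ring, hsmul,
      DirectSum.coe_decompose_mul_add_of_right_mem 𝒜 (hv e), DirectSum.decompose_aeval 𝒜 hd hz]

end Sandwich

theorem Nat.pow_le_factorial_mul_choose (n q : ℕ) : n ^ q ≤ q.factorial * (n + q).choose q := by
  rw [← Nat.ascFactorial_eq_factorial_mul_choose]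
  exact (Nat.pow_le_pow_left n.le_succ q).trans (Nat.pow_succ_le_ascFactorial (n + 1) q)

theorem Nat.factorial_mul_choose_le_pow (n q : ℕ) :
    q.factorial * (n + q).choose q ≤ (n + q) ^ q := by
  rw [← Nat.descFactorial_eq_factorial_mul_choose]
  exact Nat.descFactorial_le_pow _ _

theorem isBigO_add_pow_sub_pow (c : ℝ) (q : ℕ) :
    (fun n : ℕ => ((n : ℝ) + c) ^ q - (n : ℝ) ^ q) =O[atTop] fun n : ℕ => (n : ℝ) ^ (q - 1) := by
  rcases Nat.eq_zero_or_pos q with rfl | hq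
  · exact (isBigO_zero (E' := ℝ) _ _).congr_left fun _ => by simp
  have h : ((Polynomial.X + Polynomial.C c) ^ q - Polynomial.X ^ q : Polynomial ℝ).degree ≤
      (Polynomial.X ^ (q - 1) : Polynomial ℝ).degree := by
    rw [Polynomial.degree_X_pow]
    have h1 : ((Polynomial.X + Polynomial.C c) ^ q : Polynomial ℝ).degree = q := by
      rw [Polynomial.degree_pow, Polynomial.degree_X_add_C]; simp
    have := Polynomial.degree_sub_lt_left (p := (Polynomial.X + Polynomial.C c) ^ q)
      (q := (Polynomial.X ^ q : Polynomial ℝ)) (by rw [h1, Polynomial.degree_X_pow])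
      ((Polynomial.monic_X_add_C c).pow q).ne_zero
      (by rw [((Polynomial.monic_X_add_C c).pow q).leadingCoeff, Polynomial.leadingCoeff_X_pow])
    rw [h1] at this
    obtain ⟨p, rfl⟩ := Nat.exists_eq_add_of_le' hq
    exact (Polynomial.degree_le_iff_coeff_zero _ _).mpr fun m hm =>
      (Polynomial.degree_lt_iff_coeff_zero _ _).mp this m (Nat.succ_le_of_lt (by exact_mod_cast hm))
  simpa [Function.comp_def] using
    (Polynomial.isBigO_atTop_of_degree_le _ _ h).comp_tendsto tendsto_natCast_atTop_atTop

theorem isLittleO_add_pow_sub_pow (c : ℝ) (q : ℕ) :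
    (fun n : ℕ => ((n : ℝ) + c) ^ q - (n : ℝ) ^ q) =o[atTop] fun n : ℕ => (n : ℝ) ^ q := by
  rcases Nat.eq_zero_or_pos q with rfl | hq
  · simp
  · exact (isBigO_add_pow_sub_pow c q).trans_isLittleO
      ((isLittleO_pow_pow_atTop_of_lt (Nat.sub_lt hq one_pos)).comp_tendsto
        tendsto_natCast_atTop_atTop)

theorem isBigO_sub_of_sandwich {f : ℕ → ℝ} {κ C : ℝ} {q : ℕ}
    (h : ∀ᶠ n : ℕ in atTop, κ * (n - C) ^ q ≤ f n ∧ f n ≤ κ * (n + C) ^ q) :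
    (fun n : ℕ => f n - κ * (n : ℝ) ^ q) =O[atTop]
      fun n : ℕ => |((n : ℝ) + C) ^ q - (n : ℝ) ^ q| + |((n : ℝ) + -C) ^ q - (n : ℝ) ^ q| := by
  refine IsBigO.of_bound |κ| ?_
  filter_upwards [h] with n hn
  rw [Real.norm_eq_abs, Real.norm_of_nonneg (by positivity), mul_add, ← abs_mul, ← abs_mul,
    ← sub_eq_add_neg]
  rw [abs_le]
  have h1 := le_abs_self (κ * (((n : ℝ) + C) ^ q - (n : ℝ) ^ q))
  have h2 := neg_abs_le (κ * (((n : ℝ) - C) ^ q - (n : ℝ) ^ q))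
  have h3 := abs_nonneg (κ * (((n : ℝ) + C) ^ q - (n : ℝ) ^ q))
  have h4 := abs_nonneg (κ * (((n : ℝ) - C) ^ q - (n : ℝ) ^ q))
  constructor <;> linarith

theorem isLittleO_sub_of_sandwich {f : ℕ → ℝ} {κ C : ℝ} {q : ℕ}
    (h : ∀ᶠ n : ℕ in atTop, κ * (n - C) ^ q ≤ f n ∧ f n ≤ κ * (n + C) ^ q) :
    (fun n : ℕ => f n - κ * (n : ℝ) ^ q) =o[atTop] fun n : ℕ => (n : ℝ) ^ q :=
  (isBigO_sub_of_sandwich h).trans_isLittleO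
    ((isLittleO_add_pow_sub_pow C q).abs_left.add (isLittleO_add_pow_sub_pow (-C) q).abs_left)

theorem tendsto_pow_mul_tsum_of_isLittleO_choose {e : ℕ → ℝ} {q : ℕ}
    (he : e =o[atTop] fun n : ℕ => ((n + q).choose q : ℝ)) :
    (∀ t : ℝ, 0 < t → t < 1 → Summable fun n => e n * t ^ n) ∧
    Tendsto (fun t : ℝ => (1 - t) ^ (q + 1) * ∑' n, e n * t ^ n)
      (nhdsWithin 1 (Set.Iio 1)) (nhds 0) := by
  have key (ε : ℝ) (hε : 0 < ε) : ∃ S, 0 ≤ S ∧ ∀ t : ℝ, 0 < t → t < 1 →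
      (Summable fun n => ‖e n * t ^ n‖) ∧
      ∑' n, ‖e n * t ^ n‖ ≤ ε * (1 / (1 - t) ^ (q + 1)) + S := by
    obtain ⟨N, hN⟩ := eventually_atTop.mp (he.bound hε)
    refine ⟨∑ n ∈ Finset.range N, |e n|, by positivity, fun t ht ht1 => ?_⟩
    have h1 := (hasSum_choose_mul_geometric_of_norm_lt_one q
      (show ‖t‖ < 1 by rwa [Real.norm_of_nonneg ht.le])).mul_left ε
    have h2 : HasSum (fun n => if n ∈ Finset.range N then |e n| * t ^ n else 0)
        (∑ n ∈ Finset.range N, if n ∈ Finset.range N then |e n| * t ^ n else 0) :=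
      hasSum_sum_of_ne_finset_zero fun n hn => if_neg hn
    have hle (n : ℕ) : ‖e n * t ^ n‖ ≤ ε * ((n + q).choose q * t ^ n) +
        (if n ∈ Finset.range N then |e n| * t ^ n else 0) := by
      have htn : 0 ≤ t ^ n := by positivity
      rw [norm_mul, Real.norm_of_nonneg htn]
      split_ifs with hn
      · rw [Real.norm_eq_abs]
        exact le_add_of_nonneg_left (by positivity)
      · rw [add_zero, ← mul_assoc]
        have := hN n (by simpa using hn)
        rw [Real.norm_natCast] at this
        gcongr
    have hsum : Summable fun n => ‖e n * t ^ n‖ :=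
      Summable.of_nonneg_of_le (fun _ => norm_nonneg _) hle (h1.add h2).summable
    refine ⟨hsum, (hasSum_le hle hsum.hasSum (h1.add h2)).trans ?_⟩
    gcongr with n hn
    rw [if_pos hn]
    exact mul_le_of_le_one_right (abs_nonneg _) (pow_le_one₀ ht.le ht1.le)
  refine ⟨fun t h0 h1 => ?_, ?_⟩
  · obtain ⟨S, -, h⟩ := key 1 one_pos
    exact (h t h0 h1).1.of_norm
  rw [Metric.tendsto_nhds]
  intro ε hε
  obtain ⟨S, hS, h⟩ := key (ε / 2) (half_pos hε)
  have h1 : Tendsto (fun t : ℝ => (1 - t) ^ (q + 1) * S) (nhdsWithin 1 (Set.Iio 1)) (nhds 0) := by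
    have : Tendsto (fun t : ℝ => (1 - t) ^ (q + 1) * S) (nhds 1) (nhds ((1 - 1) ^ (q + 1) * S)) :=
      Continuous.tendsto (by fun_prop) 1
    rw [sub_self, zero_pow q.succ_ne_zero, zero_mul] at this
    exact this.mono_left nhdsWithin_le_nhds
  filter_upwards [h1.eventually_lt_const (half_pos hε), self_mem_nhdsWithin,
    nhdsWithin_le_nhds (lt_mem_nhds zero_lt_one)] with t h2 ht1 ht0
  have hpos : 0 < (1 - t) ^ (q + 1) := pow_pos (sub_pos.mpr ht1) _
  obtain ⟨hs, hb⟩ := h t ht0 ht1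
  rw [dist_zero_right, norm_mul, Real.norm_of_nonneg hpos.le]
  calc (1 - t) ^ (q + 1) * ‖∑' n, e n * t ^ n‖
      ≤ (1 - t) ^ (q + 1) * (ε / 2 * (1 / (1 - t) ^ (q + 1)) + S) := by
        gcongr
        exact (norm_tsum_le_tsum_norm hs).trans hb
    _ = ε / 2 + (1 - t) ^ (q + 1) * S := by field_simp
    _ < ε := by linarith

theorem tendsto_pow_mul_tsum_of_isLittleO_pow {f : ℕ → ℝ} {κ : ℝ} {q : ℕ}
    (hf : (fun n : ℕ => f n - κ * (n : ℝ) ^ q) =o[atTop] fun n : ℕ => (n : ℝ) ^ q) :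
    Tendsto (fun t : ℝ => (1 - t) ^ (q + 1) * ∑' n, f n * t ^ n)
      (nhdsWithin 1 (Set.Iio 1)) (nhds (κ * q.factorial)) := by
  have h1 (n : ℕ) : (n : ℝ) ^ q ≤ q.factorial * (n + q).choose q := by
    exact_mod_cast Nat.pow_le_factorial_mul_choose n q
  have h2 (n : ℕ) : (q.factorial * (n + q).choose q : ℝ) ≤ (n + q) ^ q := by
    exact_mod_cast Nat.factorial_mul_choose_le_pow n q
  have hO : (fun n : ℕ => (n : ℝ) ^ q) =O[atTop] fun n : ℕ => ((n + q).choose q : ℝ) := by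
    refine IsBigO.of_bound q.factorial (Eventually.of_forall fun n => ?_)
    rw [Real.norm_of_nonneg (by positivity), Real.norm_of_nonneg (by positivity)]
    exact h1 n
  have h3 : (fun n : ℕ => (n : ℝ) ^ q - q.factorial * (n + q).choose q) =o[atTop]
      fun n : ℕ => (n : ℝ) ^ q := by
    refine IsBigO.trans_isLittleO ?_ (isLittleO_add_pow_sub_pow q q)
    refine IsBigO.of_bound 1 (Eventually.of_forall fun n => ?_)
    rw [Real.norm_eq_abs, Real.norm_eq_abs, one_mul, abs_sub_comm, abs_of_nonneg, abs_of_nonneg]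
    all_goals linarith [h1 n, h2 n]
  have h4 : (fun n : ℕ => f n - κ * q.factorial * (n + q).choose q) =o[atTop]
      fun n : ℕ => ((n + q).choose q : ℝ) := by
    refine ((hf.add (h3.const_mul_left κ)).trans_isBigO hO).congr_left fun n => ?_
    ring
  obtain ⟨hs, hlim⟩ := tendsto_pow_mul_tsum_of_isLittleO_choose h4
  have h5 := hlim.add_const (κ * q.factorial)
  rw [zero_add] at h5
  refine h5.congr' ?_
  filter_upwards [self_mem_nhdsWithin, nhdsWithin_le_nhds (lt_mem_nhds zero_lt_one)] with t ht1 ht0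
  have hc := (hasSum_choose_mul_geometric_of_norm_lt_one q
    (show ‖t‖ < 1 by rwa [Real.norm_of_nonneg ht0.le])).mul_left (κ * q.factorial)
  have hpos : (1 - t) ^ (q + 1) ≠ 0 := (pow_pos (sub_pos.mpr ht1) _).ne'
  have := ((hs t ht0 ht1).hasSum.add hc).tsum_eq
  have h6 : (fun n : ℕ => (f n - κ * q.factorial * (n + q).choose q) * t ^ n +
      κ * q.factorial * ((n + q).choose q * t ^ n)) = fun n => f n * t ^ n := by
    ext n; ring
  rw [h6] at this
  rw [this]
  field_simp

section Saturated

variable {k R : Type*} [Field k] [CommRing R] [IsDomain R] [Algebra k R]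
  (𝒜 : ℕ → Submodule k R) [GradedAlgebra 𝒜]

theorem finite_graded_of_saturated (hsat : ∀ᶠ i in atTop, Module.finrank k (𝒜 i) ≠ 0) :
    (∀ i, Module.Finite k (𝒜 i)) ∧
      ∃ N, ∀ i n, N ≤ n → Module.finrank k (𝒜 i) ≤ Module.finrank k (𝒜 (i + n)) := by
  obtain ⟨N, hN⟩ := eventually_atTop.mp hsat
  have h (i n : ℕ) (hn : N ≤ n) : ∃ L : 𝒜 i →ₗ[k] 𝒜 (i + n), Function.Injective L := by
    obtain ⟨x, hx, hx0⟩ := (𝒜 n).ne_bot_iff.mp fun h => hN n hn (by rw [h, finrank_bot])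
    refine ⟨(LinearMap.mulRight k x).restrict fun y hy => SetLike.mul_mem_graded hy hx, ?_⟩
    intro y y' hyy
    exact Subtype.ext (mul_right_cancel₀ hx0 (congrArg Subtype.val hyy))
  have hfin (i) (hi : N ≤ i) : Module.Finite k (𝒜 i) :=
    Module.finite_of_finrank_pos (Nat.pos_of_ne_zero (hN i hi))
  have hfin' (i) : Module.Finite k (𝒜 i) := by
    obtain ⟨L, hL⟩ := h i N le_rfl
    have := hfin (i + N) (Nat.le_add_left _ _)
    exact Module.Finite.of_injective L hL
  refine ⟨hfin', N, fun i n hn => ?_⟩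
  obtain ⟨L, hL⟩ := h i n hn
  have := hfin' (i + n)
  exact LinearMap.finrank_le_finrank_of_injective hL

theorem exists_finrank_sandwich_of_saturated [Infinite k] [Algebra.FiniteType k R]
    (hsat : ∀ᶠ i in atTop, Module.finrank k (𝒜 i) ≠ 0) :
    ∃ (q d ρ M a : ℕ), 0 < d ∧ 0 < ρ ∧
      ∀ m, ρ * (m + q).choose q ≤ Module.finrank k (𝒜 ((m + M) * d)) ∧
        Module.finrank k (𝒜 ((m + M) * d)) ≤ ρ * (m + a + q).choose q := by
  obtain ⟨hfin, -⟩ := finite_graded_of_saturated 𝒜 hsat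
  obtain ⟨d, Z, hd, hZ, hind, hint⟩ :=
    exists_algebraicIndependent_homogeneous_isIntegral 𝒜 (hfin 0)
  set φ : MvPolynomial Z k →ₐ[k] R := MvPolynomial.aeval ((↑) : Z → R) with hφ
  have hφint : φ.toRingHom.IsIntegral := fun x => by
    obtain ⟨p, hp, hpx⟩ := hint x
    let e := hind.aevalEquiv
    have hrange : Algebra.adjoin k (Set.range ((↑) : Z → R)) = Algebra.adjoin k (Z : Set R) := by
      simp
    let ψ : Algebra.adjoin k (Z : Set R) →+* MvPolynomial Z k :=
      (e.symm.toAlgHom.comp (Subalgebra.inclusion hrange.ge)).toRingHom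
    have hψ : φ.toRingHom.comp ψ = algebraMap (Algebra.adjoin k (Z : Set R)) R := by
      refine RingHom.ext fun y => ?_
      have : (e (e.symm (Subalgebra.inclusion hrange.ge y)) : R) = y := by
        rw [AlgEquiv.apply_symm_apply]; rfl
      exact (hind.algebraMap_aevalEquiv _).symm.trans this
    refine ⟨p.map ψ, hp.map _, (Polynomial.eval₂_map ψ _ x).trans ?_⟩
    rw [hψ]
    exact hpx
  have hφfin : φ.Finite := by
    refine hφint.to_finite ?_
    refine RingHom.FiniteType.of_comp_finiteType (f := algebraMap k (MvPolynomial Z k)) ?_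
    have : φ.toRingHom.comp (algebraMap k (MvPolynomial Z k)) = algebraMap k R :=
      φ.comp_algebraMap
    rw [this]
    exact RingHom.finiteType_algebraMap.mpr inferInstance
  rcases hq : Z.card with _ | q
  · exfalso
    obtain rfl : Z = ∅ := Finset.card_eq_zero.mp hq
    have : Module.Finite k R := by
      rw [← RingHom.finite_algebraMap, ← φ.comp_algebraMap]
      exact RingHom.Finite.comp hφfin
        (RingHom.Finite.of_surjective _ (MvPolynomial.C_surjective (∅ : Finset R)))
    have h := WellFoundedGT.finite_ne_bot_of_iSupIndep
      (DirectSum.Decomposition.isInternal 𝒜).submodule_iSupIndep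
    obtain ⟨N, hN⟩ := eventually_atTop.mp hsat
    refine (Set.Ici_infinite N).mono (fun i hi => ?_) h
    intro hbot
    exact hN i hi (by rw [hbot, finrank_bot])
  · obtain ⟨ρ, M, a, h⟩ := exists_finrank_sandwich 𝒜 (σ := Z) (q := q) (by simpa using hq) hd _
      (fun i => hZ i i.2) hind hφfin hfin
    refine ⟨q, d, ρ, M, a, hd, Nat.pos_of_ne_zero ?_, h⟩
    rintro rfl
    obtain ⟨N, hN⟩ := eventually_atTop.mp hsat
    refine hN ((N + M) * d) ?_ (by simpa using (h N).2)
    exact (Nat.le_add_right N M).trans (Nat.le_mul_of_pos_right _ hd)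

theorem exists_real_sandwich_of_saturated [Infinite k] [Algebra.FiniteType k R]
    (hsat : ∀ᶠ i in atTop, Module.finrank k (𝒜 i) ≠ 0) :
    ∃ (q : ℕ) (κ C : ℝ), 0 < κ ∧ ∀ᶠ n : ℕ in atTop,
      κ * (n - C) ^ q ≤ Module.finrank k (𝒜 n) ∧ Module.finrank k (𝒜 n) ≤ κ * (n + C) ^ q := by
  obtain ⟨-, N, hN⟩ := finite_graded_of_saturated 𝒜 hsat
  obtain ⟨q, d, ρ, M, a, hd, hρ, h⟩ := exists_finrank_sandwich_of_saturated 𝒜 hsat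
  have hd' : (0 : ℝ) < d := by exact_mod_cast hd
  set K : ℝ := (M + N + a + q + 1) with hK
  refine ⟨q, ρ / (q.factorial * d ^ q), K * d, by positivity, ?_⟩
  have hscale (x : ℝ) : (ρ / (q.factorial * d ^ q) : ℝ) * x ^ q =
      ρ * ((x / d) ^ q / q.factorial) := by
    rw [div_pow]; field_simp
  filter_upwards [eventually_ge_atTop ((M + N) * d), eventually_ge_atTop ⌈K * d⌉₊] with n hn hn'
  have hnK : K * d ≤ n := Nat.ceil_le.mp hn'
  have hdm := Nat.div_add_mod n d
  have hmod := Nat.mod_lt n hd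
  have hdiv1 : ((n / d : ℕ) : ℝ) ≤ n / d := Nat.cast_div_le
  have hdiv2 : (n / d : ℝ) < (n / d : ℕ) + 1 := by
    rw [div_lt_iff₀ hd']
    have : n < (n / d + 1) * d := by rw [add_mul, mul_comm]; omega
    exact_mod_cast this
  constructor
  · rw [hscale]
    have hle : M + N ≤ n / d := (Nat.le_div_iff_mul_le hd).mpr hn
    obtain ⟨m, hm⟩ := Nat.exists_eq_add_of_le hle
    have h1 : (m + M) * d + N ≤ n := by
      have : N ≤ N * d := Nat.le_mul_of_pos_right _ hd
      have : d * (M + N + m) = (m + M) * d + N * d := by ring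
      rw [hm] at hdm
      omega
    have h2 := hN ((m + M) * d) (n - (m + M) * d) (by omega)
    rw [Nat.add_sub_cancel' (by omega)] at h2
    have h3 : (ρ * (m + q).choose q : ℝ) ≤ Module.finrank k (𝒜 n) := by
      exact_mod_cast (h m).1.trans h2
    refine le_trans ?_ h3
    gcongr
    rw [div_le_iff₀' (by positivity)]
    have h4 : (m : ℝ) ^ q ≤ q.factorial * (m + q).choose q := by
      exact_mod_cast Nat.pow_le_factorial_mul_choose m q
    refine le_trans (pow_le_pow_left₀ (div_nonneg (by linarith) hd'.le) ?_ q) h4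
    rw [sub_div, mul_div_cancel_right₀ _ hd'.ne']
    rw [hm] at hdiv2
    push_cast at hdiv2
    have : (0 : ℝ) ≤ a := by positivity
    have : (0 : ℝ) ≤ q := by positivity
    linarith
  · rw [hscale]
    have h1 : n + N ≤ (n / d + N + 1 + M) * d := by
      have : N ≤ N * d := Nat.le_mul_of_pos_right _ hd
      nlinarith
    have h2 := hN n ((n / d + N + 1 + M) * d - n) (by omega)
    rw [Nat.add_sub_cancel' (by omega)] at h2
    have h3 : (Module.finrank k (𝒜 n) : ℝ) ≤ ρ * (n / d + N + 1 + a + q : ℕ).choose q := by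
      exact_mod_cast h2.trans (h _).2
    refine h3.trans ?_
    gcongr
    rw [le_div_iff₀' (by positivity)]
    have h4 : (q.factorial * (n / d + N + 1 + a + q : ℕ).choose q : ℝ) ≤
        ((n / d + N + 1 + a : ℕ) + q : ℝ) ^ q := by
      exact_mod_cast Nat.factorial_mul_choose_le_pow (n / d + N + 1 + a) q
    refine h4.trans (pow_le_pow_left₀ (by positivity) ?_ q)
    rw [add_div, mul_div_cancel_right₀ _ hd'.ne']
    push_cast
    have : (0 : ℝ) ≤ M := by positivity
    linarith

end Saturated

/-- For a finitely generated saturated graded `k`-algebra `A` which is a domain of Krull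
dimension `r`, with volume `V = lim_{t→1⁻} (1-t)^r H_A(t)`, one has
`dim_k A_i = V i^{r-1}/(r-1)! + O(i^{r-2})` as `i → ∞`. -/
theorem stmt_1 {k R : Type*} [Field k] [CharZero k] [CommRing R] [IsDomain R] [Algebra k R]
    (𝒜 : ℕ → Submodule k R) [GradedAlgebra 𝒜]
    (hfg : Algebra.FiniteType k R) (r : ℕ) (hr : ringKrullDim R = r)
    (hsat : ∀ᶠ i in atTop, Module.finrank k (𝒜 i) ≠ 0)
    (V : ℝ)
    (hV : Tendsto
      (fun t : ℝ => (1 - t) ^ r * ∑' i : ℕ, (Module.finrank k (𝒜 i) : ℝ) * t ^ i)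
      (nhdsWithin 1 (Set.Iio 1)) (nhds V)) :
    (fun i : ℕ => (Module.finrank k (𝒜 i) : ℝ) - V * (i : ℝ) ^ (r - 1) / (r - 1).factorial)
      =O[atTop] fun i : ℕ => (i : ℝ) ^ (r - 2) := by
  have : Infinite k := CharZero.infinite k
  obtain ⟨q, κ, C, hκ, h⟩ := exists_real_sandwich_of_saturated 𝒜 hsat
  have hlim := tendsto_pow_mul_tsum_of_isLittleO_pow (isLittleO_sub_of_sandwich h)
  have hpow (s : ℕ) (hs : s ≠ 0) :
      Tendsto (fun t : ℝ => (1 - t) ^ s) (nhdsWithin 1 (Set.Iio 1)) (nhds 0) := by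
    have : Tendsto (fun t : ℝ => (1 - t) ^ s) (nhds 1) (nhds ((1 - 1) ^ s)) :=
      Continuous.tendsto (by fun_prop) 1
    rw [sub_self, zero_pow hs] at this
    exact this.mono_left nhdsWithin_le_nhds
  rcases lt_trichotomy r (q + 1) with hlt | rfl | hgt
  · exfalso
    have h1 := (hpow (q + 1 - r) (by omega)).mul hV
    have h2 : κ * q.factorial = 0 * V := by
      refine tendsto_nhds_unique hlim (h1.congr fun t => ?_)
      rw [← mul_assoc, ← pow_add, Nat.sub_add_cancel hlt.le]
    have : 0 < κ * q.factorial := by positivity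
    linarith
  · have hVκ : V = κ * q.factorial := tendsto_nhds_unique hV hlim
    have h1 := (isBigO_sub_of_sandwich h).trans
      ((isBigO_add_pow_sub_pow C q).abs_left.add (isBigO_add_pow_sub_pow (-C) q).abs_left)
    refine h1.congr_left fun n => ?_
    have : (q.factorial : ℝ) ≠ 0 := by positivity
    rw [hVκ, Nat.add_sub_cancel]
    field_simp
  · have h1 := (hpow (r - (q + 1)) (by omega)).mul hlim
    have h2 : V = 0 * (κ * q.factorial) := by
      refine tendsto_nhds_unique hV (h1.congr fun t => ?_)
      rw [← mul_assoc, ← pow_add, Nat.sub_add_cancel hgt.le]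
    have h3 : (fun n : ℕ => (Module.finrank k (𝒜 n) : ℝ)) =O[atTop] fun n : ℕ => (n : ℝ) ^ q :=
      ((isLittleO_sub_of_sandwich h).isBigO.add (isBigO_const_mul_self κ _ _)).congr_left
        fun n => by ring
    refine (h3.trans (IsBigO.of_bound 1 ?_)).congr_left fun n => by rw [h2]; ring
    filter_upwards [eventually_ge_atTop 1] with n hn
    rw [one_mul, Real.norm_of_nonneg (by positivity), Real.norm_of_nonneg (by positivity)]
    exact pow_le_pow_right₀ (by exact_mod_cast hn) (by omega)
end

section
/- For a weakly decreasing sequence (d_1,…,d_l) of nonnegative integers, the Schur polynomial in l+k variables equals the generating function of semistandard Young tableaux: s_{(d_1,…,d_l,0,…,0)}(x_1,…,x_{l+k}) = Σ_{f ∈ SST_{l+k}(d_i)} ∏_{(i,j) ∈ T(d_i)} x_{f(i,j)}, where T(d_i) = {(i,j) ∈ ℤ² : 1 ≤ j, 1 ≤ i ≤ d_j} and SST_n(d_i) is the set of fillings f : T(d_i) → {1,…,n} weakly increasing along rows and strictly increasing down columns. -/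
open scoped Classical

namespace SchurTableau

open Finset

section Alternant

variable {R : Type*} [CommRing R]

/-- Subtracting a multiple of the next column from each column preserves the determinant. -/
theorem det_eq_of_forall_col_eq_smul_add_succ {n : ℕ} {A B : Matrix (Fin (n + 1)) (Fin (n + 1)) R}
    (c : Fin n → R) (A_last : ∀ i, A i (Fin.last n) = B i (Fin.last n))
    (A_castSucc : ∀ i (j : Fin n), A i j.castSucc = B i j.castSucc + c j * A i j.succ) :
    A.det = B.det := by
  rw [← Matrix.det_submatrix_equiv_self Fin.revPerm A,
    ← Matrix.det_submatrix_equiv_self Fin.revPerm B]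
  refine Matrix.det_eq_of_forall_col_eq_smul_add_pred (fun j => c j.rev) (fun i => ?_)
    (fun i j => ?_)
  · simpa using A_last i.rev
  · simpa [Fin.rev_succ, Fin.rev_castSucc] using A_castSucc i.rev j.rev

/-- The alternant `det (x_i ^ (D_j + n - 1 - j))`. -/
def alternant {n : ℕ} (D : Fin n → ℕ) (x : Fin n → R) : R :=
  Matrix.det (Matrix.of fun i j : Fin n => x i ^ (D j + (n - 1 - (j : ℕ))))

theorem pow_sub_pow_mul_pow (x y : R) (e : ℕ) {a b : ℕ} (h : a ≤ b) :
    x ^ (b + (e + 1)) - y ^ (b - a + 1) * x ^ (a + e) =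
      (x - y) * ∑ m ∈ Icc a b, y ^ (b - m) * x ^ (m + e) := by
  induction b, h using Nat.le_induction with
  | base => simp; ring
  | succ b h ih =>
    rw [← Finset.insert_Icc_right_eq_Icc_add_one (by omega), sum_insert (by simp), mul_add]
    have : ∑ m ∈ Icc a b, y ^ (b + 1 - m) * x ^ (m + e) =
        y * ∑ m ∈ Icc a b, y ^ (b - m) * x ^ (m + e) := by
      rw [mul_sum]
      refine sum_congr rfl fun m hm => ?_
      rw [Nat.sub_add_comm (mem_Icc.1 hm).2, pow_succ]
      ring
    rw [this, mul_left_comm (x - y) y, ← ih, Nat.sub_add_comm h]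
    simp
    ring

/-- The sequences interlacing `D`. -/
def interlacing {n : ℕ} (D : Fin (n + 1) → ℕ) : Finset (Fin n → ℕ) :=
  Fintype.piFinset fun j => Icc (D j.succ) (D j.castSucc)

theorem alternant_succ {n : ℕ} (D : Fin (n + 1) → ℕ) (hD : Antitone D) (x : Fin (n + 1) → R) :
    alternant D x = (∏ i : Fin n, (x i.castSucc - x (Fin.last n))) *
      ∑ μ ∈ interlacing D,
        x (Fin.last n) ^ (D (Fin.last n) + ∑ j, (D j.castSucc - μ j)) *
          alternant μ (fun i => x i.castSucc) := by
  set y := x (Fin.last n) with hy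
  let B : Matrix (Fin (n + 1)) (Fin (n + 1)) R := Matrix.of fun i =>
    Fin.lastCases (x i ^ D (Fin.last n)) fun j : Fin n =>
      (x i - y) * ∑ m ∈ Icc (D j.succ) (D j.castSucc),
        y ^ (D j.castSucc - m) * x i ^ (m + (n - 1 - (j : ℕ)))
  have hAB : alternant D x = B.det := by
    refine det_eq_of_forall_col_eq_smul_add_succ
      (fun j => y ^ (D j.castSucc - D j.succ + 1)) (fun i => ?_) fun i j => ?_
    · simp [B]
    · have h := pow_sub_pow_mul_pow (x i) y (n - 1 - (j : ℕ))
        (hD (Fin.castSucc_lt_succ (i := j)).le)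
      have h1 : n + 1 - 1 - (j : ℕ) = n - 1 - (j : ℕ) + 1 := by omega
      have h2 : n + 1 - 1 - ((j : ℕ) + 1) = n - 1 - (j : ℕ) := by omega
      simp only [B, Matrix.of_apply, Fin.lastCases_castSucc, Fin.val_castSucc, Fin.val_succ]
      rw [h1, h2, ← h]
      ring
  have hB : B.det = y ^ D (Fin.last n) * Matrix.det (Matrix.of fun i j : Fin n =>
      (x i.castSucc - y) * ∑ m ∈ Icc (D j.succ) (D j.castSucc),
        y ^ (D j.castSucc - m) * x i.castSucc ^ (m + (n - 1 - (j : ℕ)))) := by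
    rw [Matrix.det_succ_row B (Fin.last n), Fin.sum_univ_castSucc]
    have h0 : ∀ j : Fin n, B (Fin.last n) j.castSucc = 0 := fun j => by simp [B, hy]
    have h1 : (-1 : R) ^ ((Fin.last n : ℕ) + (Fin.last n : ℕ)) = 1 :=
      Even.neg_one_pow ⟨_, rfl⟩
    simp only [h0, h1, mul_zero, zero_mul, sum_const_zero, zero_add, one_mul]
    congr 1
    · simp [B, hy]
    · congr 1
      ext i j
      simp [B]
  have hC : Matrix.det (Matrix.of fun i j : Fin n =>
      ∑ m ∈ Icc (D j.succ) (D j.castSucc),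
        y ^ (D j.castSucc - m) * x i.castSucc ^ (m + (n - 1 - (j : ℕ)))) =
      ∑ μ ∈ interlacing D, y ^ (∑ j, (D j.castSucc - μ j)) *
        alternant μ (fun i => x i.castSucc) := by
    rw [← Matrix.det_transpose]
    have := (Matrix.detRowAlternating (n := Fin n) (R := R)).toMultilinearMap.map_sum_finset
      (fun (j : Fin n) (m : ℕ) (i : Fin n) =>
        y ^ (D j.castSucc - m) * x i.castSucc ^ (m + (n - 1 - (j : ℕ))))
      (fun j => Icc (D j.succ) (D j.castSucc))
    refine Eq.trans ?_ (this.trans (sum_congr rfl fun μ _ => ?_))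
    · change Matrix.det _ = Matrix.det _
      congr 1
      ext j i
      simp [Finset.sum_apply]
    · change Matrix.det _ = _
      rw [← prod_pow_eq_pow_sum, alternant, ← Matrix.det_transpose (Matrix.of _),
        ← Matrix.det_mul_column]
      rfl
  have hS := Matrix.det_mul_column (fun i : Fin n => x i.castSucc - y)
    (Matrix.of fun i j : Fin n => ∑ m ∈ Icc (D j.succ) (D j.castSucc),
      y ^ (D j.castSucc - m) * x i.castSucc ^ (m + (n - 1 - (j : ℕ))))
  simp only [Matrix.of_apply] at hS
  rw [hAB, hB, hS, hC, mul_left_comm, mul_sum]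
  simp only [pow_add, mul_assoc]

theorem alternant_zero_succ {n : ℕ} (x : Fin (n + 1) → R) :
    alternant 0 x = (∏ i : Fin n, (x i.castSucc - x (Fin.last n))) *
      alternant 0 (fun i => x i.castSucc) := by
  have h : interlacing (0 : Fin (n + 1) → ℕ) = {0} := by
    ext μ
    simp [interlacing, funext_iff]
  rw [alternant_succ 0 antitone_const, h]
  simp

end Alternant

section Tableau

/-- The length of row `j` (counted from `1`) of the shape `D`. -/
def rowLen {n : ℕ} (D : Fin n → ℕ) (j : ℕ) : ℕ :=
  if h : 1 ≤ j ∧ j - 1 < n then D ⟨j - 1, h.2⟩ else 0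

/-- The cells `(i, j)` of the shape `D`, where `j` is the row. -/
def cells {n : ℕ} (D : Fin n → ℕ) : Finset (ℕ × ℕ) :=
  (Icc 1 (univ.sup D) ×ˢ Icc 1 n).filter fun p => p.1 ≤ rowLen D p.2

/-- Rows weakly increase and columns strictly increase. -/
def IsSemistandard {C : Finset (ℕ × ℕ)} {n : ℕ} (f : C → Fin n) : Prop :=
  (∀ p q : C, (p : ℕ × ℕ).1 + 1 = (q : ℕ × ℕ).1 → (p : ℕ × ℕ).2 = (q : ℕ × ℕ).2 → f p ≤ f q) ∧
  ∀ p q : C, (p : ℕ × ℕ).1 = (q : ℕ × ℕ).1 → (p : ℕ × ℕ).2 + 1 = (q : ℕ × ℕ).2 → f p < f q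

theorem rowLen_succ {n : ℕ} (D : Fin n → ℕ) (j : Fin n) : rowLen D (j + 1) = D j := by
  simp [rowLen]

theorem exists_of_rowLen_pos {n : ℕ} {D : Fin n → ℕ} {j : ℕ} (h : 1 ≤ rowLen D j) :
    ∃ k : Fin n, j = k + 1 := by
  unfold rowLen at h
  split_ifs at h with hj
  · exact ⟨⟨j - 1, by omega⟩, by simp; omega⟩
  · omega

theorem mem_cells {n : ℕ} {D : Fin n → ℕ} {p : ℕ × ℕ} :
    p ∈ cells D ↔ 1 ≤ p.1 ∧ p.1 ≤ rowLen D p.2 := by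
  simp only [cells, mem_filter, mem_product, mem_Icc]
  refine ⟨fun h => ⟨h.1.1.1, h.2⟩, fun h => ?_⟩
  obtain ⟨k, hk⟩ := exists_of_rowLen_pos (h.1.trans h.2)
  refine ⟨⟨⟨h.1, ?_⟩, by omega, by omega⟩, h.2⟩
  have h2 := h.2
  rw [hk, rowLen_succ] at h2
  exact h2.trans (le_sup (mem_univ k))

theorem mk_mem_cells {n : ℕ} {D : Fin n → ℕ} {i : ℕ} {j : Fin n} :
    (i, (j : ℕ) + 1) ∈ cells D ↔ 1 ≤ i ∧ i ≤ D j := by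
  rw [mem_cells, rowLen_succ]

theorem exists_of_mem_cells {n : ℕ} {D : Fin n → ℕ} {p : ℕ × ℕ} (h : p ∈ cells D) :
    ∃ (i : ℕ) (j : Fin n), p = (i, (j : ℕ) + 1) ∧ 1 ≤ i ∧ i ≤ D j := by
  obtain ⟨k, hk⟩ := exists_of_rowLen_pos ((mem_cells.1 h).1.trans (mem_cells.1 h).2)
  refine ⟨p.1, k, Prod.ext rfl hk, ?_⟩
  rw [← mk_mem_cells, ← hk]
  exact h

theorem card_cells {n : ℕ} (D : Fin n → ℕ) : #(cells D) = ∑ j, D j := by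
  have h : cells D = (univ.sigma fun j : Fin n => Icc 1 (D j)).image
      fun s => (s.2, (s.1 : ℕ) + 1) := by
    ext p
    simp only [mem_image, mem_sigma, mem_univ, true_and, mem_Icc]
    constructor
    · intro hp
      obtain ⟨i, j, rfl, h⟩ := exists_of_mem_cells hp
      exact ⟨⟨j, i⟩, h, rfl⟩
    · rintro ⟨⟨j, i⟩, h, rfl⟩
      exact mk_mem_cells.2 h
  rw [h, card_image_of_injective, card_sigma]
  · simp
  · rintro ⟨j, i⟩ ⟨j', i'⟩ h
    simp only [Prod.mk.injEq, Nat.add_right_cancel_iff] at h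
    obtain ⟨rfl, h⟩ := h
    obtain rfl := Fin.ext h
    rfl

variable {n : ℕ}

theorem IsSemistandard.row_le {m : ℕ} {D : Fin m → ℕ} {f : cells D → Fin n}
    (hf : IsSemistandard f) {i i' : ℕ} {j : ℕ} (h : (i, j) ∈ cells D) (h' : (i', j) ∈ cells D)
    (hi : i ≤ i') : f ⟨(i, j), h⟩ ≤ f ⟨(i', j), h'⟩ := by
  induction i', hi using Nat.le_induction with
  | base => exact le_rfl
  | succ k hk ih =>
    have hmem : (k, j) ∈ cells D :=
      mem_cells.2 ⟨(mem_cells.1 h).1.trans hk, (Nat.le_succ k).trans (mem_cells.1 h').2⟩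
    exact (ih hmem).trans (hf.1 _ _ rfl rfl)

theorem IsSemistandard.le_val {m : ℕ} {D : Fin m → ℕ} (hD : Antitone D) {f : cells D → Fin n}
    (hf : IsSemistandard f) {i : ℕ} (k : ℕ) (hk : k < m)
    (h : (i, k + 1) ∈ cells D) : k ≤ f ⟨(i, k + 1), h⟩ := by
  induction k with
  | zero => exact Nat.zero_le _
  | succ k ih =>
    have hmem : (i, k + 1) ∈ cells D := by
      have h1 := (mk_mem_cells (D := D) (j := ⟨k + 1, hk⟩)).1 h
      refine (mk_mem_cells (D := D) (j := ⟨k, by omega⟩)).2 ⟨h1.1, h1.2.trans (hD ?_)⟩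
      simp
    have := ih (by omega) hmem
    have h2 : f ⟨(i, k + 1), hmem⟩ < f ⟨(i, k + 1 + 1), h⟩ := hf.2 _ _ rfl rfl
    rw [Fin.lt_def] at h2
    omega

/-- The shape formed by the entries different from the largest one. -/
def innerShape {D : Fin (n + 1) → ℕ} (f : cells D → Fin (n + 1)) : Fin n → ℕ := fun j =>
  (univ.filter fun p : cells D => (p : ℕ × ℕ).2 = j + 1 ∧ f p ≠ Fin.last n).sup
    fun p => (p : ℕ × ℕ).1

theorem mem_interlacing {D : Fin (n + 1) → ℕ} {μ : Fin n → ℕ} :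
    μ ∈ interlacing D ↔ ∀ j, D j.succ ≤ μ j ∧ μ j ≤ D j.castSucc := by
  simp [interlacing]

theorem le_innerShape {D : Fin (n + 1) → ℕ} {f : cells D → Fin (n + 1)} {i : ℕ} {j : Fin n}
    (h : (i, (j : ℕ) + 1) ∈ cells D) (hf : f ⟨_, h⟩ ≠ Fin.last n) : i ≤ innerShape f j := by
  unfold innerShape
  exact le_sup (f := fun p : cells D => (p : ℕ × ℕ).1) (b := ⟨(i, (j : ℕ) + 1), h⟩)
    (by simpa using hf)

theorem innerShape_mem_interlacing {D : Fin (n + 1) → ℕ} (hD : Antitone D)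
    {f : cells D → Fin (n + 1)} (hf : IsSemistandard f) : innerShape f ∈ interlacing D := by
  rw [mem_interlacing]
  refine fun j => ⟨?_, ?_⟩
  · rcases Nat.eq_zero_or_pos (D j.succ) with h0 | h0
    · omega
    have hq : (D j.succ, (j : ℕ) + 1 + 1) ∈ cells D :=
      (mk_mem_cells (D := D) (j := j.succ)).2 ⟨h0, le_rfl⟩
    have hp : (D j.succ, (j : ℕ) + 1) ∈ cells D :=
      (mk_mem_cells (D := D) (j := j.castSucc)).2 ⟨h0, hD (Fin.castSucc_lt_succ).le⟩
    refine le_innerShape hp (ne_of_lt ?_)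
    exact lt_of_lt_of_le (hf.2 ⟨_, hp⟩ ⟨_, hq⟩ rfl rfl) (Fin.le_last _)
  · refine Finset.sup_le ?_
    rintro ⟨⟨i, k⟩, hp⟩ h
    simp only [mem_filter, mem_univ, true_and] at h
    obtain ⟨rfl, -⟩ := h
    exact ((mk_mem_cells (D := D) (j := j.castSucc)).1 hp).2

theorem ne_last_iff_mem_cells_innerShape {D : Fin (n + 1) → ℕ} (hD : Antitone D)
    {f : cells D → Fin (n + 1)} (hf : IsSemistandard f) (p : cells D) :
    f p ≠ Fin.last n ↔ (p : ℕ × ℕ) ∈ cells (innerShape f) := by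
  obtain ⟨p, hp⟩ := p
  obtain ⟨i, j, rfl, hi, hij⟩ := exists_of_mem_cells hp
  induction j using Fin.lastCases with
  | last =>
    have h1 : f ⟨_, hp⟩ = Fin.last n :=
      le_antisymm (Fin.le_last _) (Fin.le_def.2 (hf.le_val hD n (by omega) hp))
    refine iff_of_false (not_not_intro h1) fun h => ?_
    obtain ⟨i', j', h, -⟩ := exists_of_mem_cells h
    simp only [Fin.val_last, Prod.mk.injEq, Nat.add_right_cancel_iff] at h
    omega
  | cast j =>
    refine Iff.trans ?_ (mk_mem_cells (D := innerShape f) (j := j)).symm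
    refine ⟨fun h => ⟨hi, le_innerShape (j := j) hp h⟩, fun ⟨_, h⟩ => ?_⟩
    unfold innerShape at h
    obtain ⟨⟨⟨i', k⟩, hq⟩, hq', hle⟩ := (Finset.le_sup_iff (by exact hi)).1 h
    simp only [mem_filter, mem_univ, true_and] at hq'
    obtain ⟨rfl, hlast⟩ := hq'
    exact ne_of_lt (lt_of_le_of_lt (hf.row_le hp hq hle) (Fin.lt_last_iff_ne_last.2 hlast))

theorem cells_subset {D : Fin (n + 1) → ℕ} {μ : Fin n → ℕ} (hμ : μ ∈ interlacing D) :
    cells μ ⊆ cells D := by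
  intro p hp
  obtain ⟨i, j, rfl, hi, hij⟩ := exists_of_mem_cells hp
  exact (mk_mem_cells (D := D) (j := j.castSucc)).2 ⟨hi, hij.trans (mem_interlacing.1 hμ j).2⟩

/-- Extend a filling by the largest entry. -/
def extend {C C' : Finset (ℕ × ℕ)} (g : C' → Fin n) (p : C) : Fin (n + 1) :=
  if h : (p : ℕ × ℕ) ∈ C' then (g ⟨p, h⟩).castSucc else Fin.last n

theorem extend_ne_last {C C' : Finset (ℕ × ℕ)} {g : C' → Fin n} {p : C} :
    extend g p ≠ Fin.last n ↔ (p : ℕ × ℕ) ∈ C' := by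
  unfold extend
  split_ifs with h <;> simp [h, Fin.castSucc_ne_last]

theorem isSemistandard_extend {D : Fin (n + 1) → ℕ} {μ : Fin n → ℕ} (hμ : μ ∈ interlacing D)
    {g : cells μ → Fin n} (hg : IsSemistandard g) :
    IsSemistandard (extend g : cells D → Fin (n + 1)) := by
  constructor
  · intro p q h1 h2
    by_cases hq : (q : ℕ × ℕ) ∈ cells μ
    · have hp : (p : ℕ × ℕ) ∈ cells μ := by
        have := mem_cells.1 p.2
        rw [mem_cells] at hq ⊢
        rw [h2]
        omega
      simp only [extend, hp, hq, dif_pos, Fin.castSucc_le_castSucc_iff]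
      exact hg.1 _ _ h1 h2
    · simp only [extend, hq, dif_neg, not_false_eq_true]
      exact Fin.le_last _
  · intro p q h1 h2
    have hp : (p : ℕ × ℕ) ∈ cells μ := by
      obtain ⟨⟨i, k⟩, hp⟩ := p
      obtain ⟨⟨i', k'⟩, hq⟩ := q
      simp only at h1 h2
      subst h1 h2
      obtain ⟨i', j, hj, hi, hij⟩ := exists_of_mem_cells hq
      obtain ⟨i'', j', hj', -⟩ := exists_of_mem_cells hp
      simp only [Prod.mk.injEq, Nat.add_right_cancel_iff] at hj hj'
      obtain ⟨rfl, hj⟩ := hj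
      obtain ⟨rfl, hj'⟩ := hj'
      have hlt : (j' : ℕ) < n := by omega
      obtain rfl : j = (⟨j', hlt⟩ : Fin n).succ := Fin.ext (by simp; omega)
      change (i, k) ∈ cells μ
      rw [hj']
      exact (mk_mem_cells (D := μ) (j := ⟨j', hlt⟩)).2
        ⟨hi, hij.trans (mem_interlacing.1 hμ _).1⟩
    by_cases hq : (q : ℕ × ℕ) ∈ cells μ
    · simp only [extend, hp, hq, dif_pos, Fin.castSucc_lt_castSucc_iff]
      exact hg.2 _ _ h1 h2
    · simp only [extend, hp, hq, dif_pos, dif_neg, not_false_eq_true]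
      exact Fin.castSucc_lt_last _

theorem innerShape_extend {D : Fin (n + 1) → ℕ} {μ : Fin n → ℕ} (hμ : μ ∈ interlacing D)
    (g : cells μ → Fin n) : innerShape (extend g : cells D → Fin (n + 1)) = μ := by
  funext j
  refine le_antisymm (Finset.sup_le ?_) ?_
  · rintro ⟨⟨i, k⟩, hp⟩ h
    simp only [mem_filter, mem_univ, true_and, extend_ne_last] at h
    obtain ⟨rfl, h⟩ := h
    exact (mk_mem_cells.1 h).2
  · rcases Nat.eq_zero_or_pos (μ j) with h0 | h0
    · omega
    have hp : (μ j, (j : ℕ) + 1) ∈ cells μ := mk_mem_cells.2 ⟨h0, le_rfl⟩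
    exact le_innerShape (cells_subset hμ hp) (extend_ne_last.2 hp)

variable {R : Type*} [CommRing R]

theorem prod_extend {D : Fin (n + 1) → ℕ} {μ : Fin n → ℕ} (hμ : μ ∈ interlacing D)
    (g : cells μ → Fin n) (x : Fin (n + 1) → R) :
    ∏ p : cells D, x (extend g p) =
      x (Fin.last n) ^ (D (Fin.last n) + ∑ j, (D j.castSucc - μ j)) *
        ∏ p : cells μ, x (g p).castSucc := by
  let F : ℕ × ℕ → R := fun p =>
    x (if h : p ∈ cells μ then (g ⟨p, h⟩).castSucc else Fin.last n)
  have h1 : ∏ p : cells D, x (extend g p) = ∏ p ∈ cells D, F p :=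
    Finset.prod_coe_sort (cells D) F
  have h2 : ∏ p : cells μ, x (g p).castSucc = ∏ p ∈ cells μ, F p := by
    rw [← Finset.prod_coe_sort (cells μ) F]
    exact prod_congr rfl fun p _ => by simp [F]
  have h3 : ∏ p ∈ cells D \ cells μ, F p = x (Fin.last n) ^ #(cells D \ cells μ) := by
    refine prod_eq_pow_card fun p hp => ?_
    simp [F, (mem_sdiff.1 hp).2]
  have h4 : #(cells D \ cells μ) = D (Fin.last n) + ∑ j, (D j.castSucc - μ j) := by
    rw [card_sdiff_of_subset (cells_subset hμ), card_cells, card_cells, Fin.sum_univ_castSucc,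
      sum_tsub_distrib _ fun j _ => (mem_interlacing.1 hμ j).2]
    have := sum_le_sum fun j (_ : j ∈ univ) => (mem_interlacing.1 hμ j).2
    omega
  rw [h1, h2, ← prod_sdiff (cells_subset hμ), h3, h4]

/-- The generating function of the semistandard fillings of the shape `D`. -/
noncomputable def tableauSum {n : ℕ} (D : Fin n → ℕ) (x : Fin n → R) : R :=
  ∑ f : cells D → Fin n with IsSemistandard f, ∏ p, x (f p)

theorem tableauSum_succ (D : Fin (n + 1) → ℕ) (hD : Antitone D) (x : Fin (n + 1) → R) :
    tableauSum D x = ∑ μ ∈ interlacing D,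
      x (Fin.last n) ^ (D (Fin.last n) + ∑ j, (D j.castSucc - μ j)) *
        tableauSum μ (fun i => x i.castSucc) := by
  unfold tableauSum
  rw [← sum_fiberwise_of_maps_to (t := interlacing D) (g := innerShape)
    fun f hf => innerShape_mem_interlacing hD (mem_filter.1 hf).2]
  refine sum_congr rfl fun μ hμ => ?_
  rw [mul_sum]
  symm
  refine sum_bij (fun g _ => extend g) (fun g hg => ?_) (fun g _ g' _ h => ?_) (fun f hf => ?_)
    fun g _ => (prod_extend hμ g x).symm
  · simp only [mem_filter, mem_univ, true_and] at hg ⊢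
    exact ⟨isSemistandard_extend hμ hg, innerShape_extend hμ g⟩
  · funext p
    have := congrFun h ⟨p, cells_subset hμ p.2⟩
    simpa [extend] using this
  · simp only [mem_filter, mem_univ, true_and] at hf
    obtain ⟨hf, rfl⟩ := hf
    have hne := ne_last_iff_mem_cells_innerShape hD hf
    refine ⟨fun p => (f ⟨p, cells_subset hμ p.2⟩).castPred ((hne _).2 p.2), ?_, ?_⟩
    · simp only [mem_filter, mem_univ, true_and]
      refine ⟨fun p q h1 h2 => ?_, fun p q h1 h2 => ?_⟩
      · exact Fin.castPred_le_castPred_iff.2 (hf.1 _ _ h1 h2)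
      · exact Fin.castPred_lt_castPred_iff.2 (hf.2 _ _ h1 h2)
    · funext p
      by_cases hp : (p : ℕ × ℕ) ∈ cells (innerShape f)
      · simp [extend, hp]
      · have := not_not.1 (mt (hne p).1 hp)
        simp [extend, hp, this]

theorem antitone_of_mem_interlacing {D : Fin (n + 1) → ℕ} (hD : Antitone D) {μ : Fin n → ℕ}
    (hμ : μ ∈ interlacing D) : Antitone μ := by
  intro i j hij
  rcases hij.eq_or_lt with rfl | hlt
  · exact le_rfl
  · exact ((mem_interlacing.1 hμ j).2.trans (hD (Fin.succ_le_castSucc_iff.2 hlt))).trans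
      (mem_interlacing.1 hμ i).1

theorem alternant_zero_mul_tableauSum : ∀ {n : ℕ} (D : Fin n → ℕ) (_ : Antitone D)
    (x : Fin n → R), alternant 0 x * tableauSum D x = alternant D x
  | 0, D, _, x => by
    have : IsEmpty (cells D) := ⟨fun p => by
      obtain ⟨_, j, -⟩ := exists_of_mem_cells p.2
      exact j.elim0⟩
    have h : ∀ f : cells D → Fin 0, IsSemistandard f := fun f =>
      ⟨fun p => isEmptyElim p, fun p => isEmptyElim p⟩
    simp [alternant, tableauSum, h]
  | n + 1, D, hD, x => by
    rw [alternant_zero_succ, tableauSum_succ D hD, alternant_succ D hD, mul_assoc, mul_sum]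
    congr 1
    refine sum_congr rfl fun μ hμ => ?_
    rw [← alternant_zero_mul_tableauSum μ (antitone_of_mem_interlacing hD hμ), mul_left_comm]

end Tableau

end SchurTableau

/-- Kostka's combinatorial description of Schur polynomials: for a weakly decreasing sequence
`(d_1,…,d_l)` of nonnegative integers, padded by zeros to `n = l + k` variables, the
bialternant Schur polynomial equals the generating function of `n`-semistandard Young
tableaux of shape `(d_i)`; stated with denominators cleared:
`det(x_i^{n-1-j}) · Σ_{f ∈ SST_n(d)} ∏_{(i,j) ∈ T(d)} x_{f(i,j)} = det(x_i^{D_j + n-1-j})`,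
where `D` is the padded partition and the tableau `T(d) = {(i,j) : 1 ≤ j ≤ l, 1 ≤ i ≤ d_j}`,
a semistandard filling satisfying `f(i,j) ≤ f(i+1,j)` and `f(i,j) < f(i,j+1)`. -/
theorem stmt_6 (l K : ℕ) (d : Fin l → ℕ) (hd : Antitone d) (x : Fin (l + K) → ℚ) :
    -- the cells of the Young tableau, as pairs `(i, j)` with `1 ≤ j ≤ l`, `1 ≤ i ≤ d_j`
    ∀ dval : ℕ → ℕ, (dval = fun j => if h : 1 ≤ j ∧ j ≤ l then d ⟨j - 1, by omega⟩ else 0) →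
    ∀ cells : Finset (ℕ × ℕ),
      (cells = (Finset.Icc 1 (Finset.univ.sup d) ×ˢ Finset.Icc 1 l).filter
        (fun p => p.1 ≤ dval p.2)) →
    Matrix.det (Matrix.of fun i j : Fin (l + K) => x i ^ (l + K - 1 - (j : ℕ)))
        * ∑ f ∈ (Finset.univ : Finset (↥cells → Fin (l + K))).filter
            (fun f => (∀ p q : ↥cells, (p : ℕ × ℕ).1 + 1 = (q : ℕ × ℕ).1 →
                  (p : ℕ × ℕ).2 = (q : ℕ × ℕ).2 → f p ≤ f q) ∧
                (∀ p q : ↥cells, (p : ℕ × ℕ).1 = (q : ℕ × ℕ).1 →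
                  (p : ℕ × ℕ).2 + 1 = (q : ℕ × ℕ).2 → f p < f q)),
            ∏ p : ↥cells, x (f p)
      = Matrix.det (Matrix.of fun i j : Fin (l + K) =>
          x i ^ ((if h : (j : ℕ) < l then d ⟨j, h⟩ else 0) + (l + K - 1 - (j : ℕ)))) := by
  intro dval hdval C hC
  let D : Fin (l + K) → ℕ := fun j => if h : (j : ℕ) < l then d ⟨j, h⟩ else 0
  have hD : Antitone D := by
    intro i j hij
    have hij' : (i : ℕ) ≤ j := hij
    by_cases hj : (j : ℕ) < l
    · have hi : (i : ℕ) < l := by omega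
      simp only [D, hi, hj, dif_pos]
      exact hd hij'
    · simp [D, hj]
  have hrow : ∀ j, dval j = SchurTableau.rowLen D j := by
    intro j
    simp only [hdval, SchurTableau.rowLen, D]
    split_ifs <;> first | rfl | omega
  have hcells : C = SchurTableau.cells D := by
    ext ⟨i, j⟩
    rw [SchurTableau.mem_cells, hC]
    simp only [Finset.mem_filter, Finset.mem_product, Finset.mem_Icc, ← hrow]
    refine ⟨fun h => ⟨h.1.1.1, h.2⟩, fun h => ?_⟩
    have hj : 1 ≤ j ∧ j ≤ l := by
      by_contra hj
      simp only [hdval, hj, dif_neg, not_false_eq_true] at h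
      omega
    refine ⟨⟨⟨h.1, h.2.trans ?_⟩, hj⟩, h.2⟩
    simp only [hdval, hj, and_self, dif_pos]
    exact Finset.le_sup (Finset.mem_univ _)
  clear hC
  subst hcells
  have h := SchurTableau.alternant_zero_mul_tableauSum D hD x
  simp only [SchurTableau.alternant, SchurTableau.tableauSum, Pi.zero_apply, zero_add] at h
  convert h using 3
  ext f
  rw [Finset.mem_filter, Finset.mem_filter, SchurTableau.IsSemistandard]
end

section
/- For l ≥ 3, let α = (l-3, l-3, l-3, l-4, l-5, …, 1, 0) and δ = (l-1, l-2, …, 1, 0). Then s_δ(x_1,…,x_l) - (x_{l-1} x_l² + x_{l-1}² x_l) · s_α(x_1,…,x_l) is a polynomial with nonnegative coefficients. -/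
open MvPolynomial

namespace Alternant

variable {R : Type*} [CommRing R]

/-- The matrix `x_i ^ a_j`. -/
def powMatrix {n : ℕ} (x : Fin n → R) (a : Fin n → ℕ) : Matrix (Fin n) (Fin n) R :=
  Matrix.of fun i j => x i ^ a j

lemma det_vandermonde_succ {n : ℕ} (x : Fin (n + 1) → R) :
    (Matrix.vandermonde x).det
      = (∏ i : Fin n, (x i.succ - x 0)) * (Matrix.vandermonde fun i : Fin n => x i.succ).det := by
  simp [Matrix.det_vandermonde, Fin.prod_univ_succ]

lemma det_of_row_zero {n : ℕ} (B : Matrix (Fin (n + 1)) (Fin (n + 1)) R)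
    (h : ∀ j : Fin n, B 0 j.succ = 0) :
    B.det = B 0 0 * (Matrix.of fun i j : Fin n => B i.succ j.succ).det := by
  rw [Matrix.det_succ_row_zero, Fin.sum_univ_succ]
  simp [h]
  rfl

/-- Multilinear expansion of a determinant whose columns are combinations of power columns. -/
lemma det_sum_columns {n : ℕ} (y : Fin n → R) (s : Fin n → Finset ℕ) (c : Fin n → ℕ → R) :
    (Matrix.of fun i j : Fin n => ∑ t ∈ s j, c j t * y i ^ t).det
      = ∑ b ∈ Fintype.piFinset s, (∏ j, c j (b j)) * (powMatrix y b).det := by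
  have key := (Matrix.detRowAlternating (n := Fin n) (R := R)).toMultilinearMap.map_sum_finset
    (fun j t => c j t • fun i => y i ^ t) s
  have e : (Matrix.of fun i j : Fin n => ∑ t ∈ s j, c j t * y i ^ t).det
      = Matrix.detRowAlternating (fun j => ∑ t ∈ s j, c j t • fun i => y i ^ t) := by
    rw [← Matrix.det_transpose]
    refine congrArg Matrix.det ?_
    ext i j
    simp [Matrix.transpose_apply, Finset.sum_apply]
  rw [e]
  refine key.trans (Finset.sum_congr rfl fun b _ => ?_)
  have := (Matrix.detRowAlternating (n := Fin n) (R := R)).toMultilinearMap.map_smul_univ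
    (fun j => c j (b j)) (fun j i => y i ^ b j)
  refine this.trans ?_
  rw [smul_eq_mul, ← Matrix.det_transpose (powMatrix y b)]
  rfl

lemma exists_det_powMatrix_eq (P : Subsemiring R) {n : ℕ} (x : Fin n → R) (hx : ∀ i, x i ∈ P)
    (a : Fin n → ℕ) (ha : StrictMono a) :
    ∃ Q ∈ P, (powMatrix x a).det = Q * (Matrix.vandermonde x).det := by
  induction n with
  | zero => exact ⟨1, P.one_mem, by simp⟩
  | succ n ih =>
    set y : Fin n → R := fun i => x i.succ with hy
    let s : Fin n → Finset ℕ := fun j => Finset.Ico (a j.castSucc) (a j.succ)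
    let c : Fin n → ℕ → R := fun j t => x 0 ^ (a j.succ - 1 - t)
    have hlt : ∀ j : Fin n, a j.castSucc < a j.succ := fun j => ha j.castSucc_lt_succ
    let B : Matrix (Fin (n + 1)) (Fin (n + 1)) R := Matrix.of fun i =>
      Fin.cons (x i ^ a 0) fun j =>
        x i ^ a j.succ - x 0 ^ (a j.succ - a j.castSucc) * x i ^ a j.castSucc
    have hB : (powMatrix x a).det = B.det :=
      Matrix.det_eq_of_forall_col_eq_smul_add_pred
        (fun j => x 0 ^ (a j.succ - a j.castSucc)) (fun i => by simp [powMatrix, B])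
        (fun i j => by simp [powMatrix, B])
    have hB0 : ∀ j : Fin n, B 0 j.succ = 0 := fun j => by
      simp only [B, Matrix.of_apply, Fin.cons_succ]
      rw [← pow_add, Nat.sub_add_cancel (hlt j).le, sub_self]
    have hfac : (Matrix.of fun i j : Fin n => B i.succ j.succ)
        = Matrix.of fun i j => (y i - x 0) *
          (Matrix.of fun i j : Fin n => ∑ t ∈ s j, c j t * y i ^ t) i j := by
      ext i j
      simp only [B, s, c, Matrix.of_apply, Fin.cons_succ, Finset.sum_Ico_eq_sum_range]
      have h1 : x i.succ ^ a j.succ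
          = y i ^ a j.castSucc * y i ^ (a j.succ - a j.castSucc) := by
        rw [← pow_add, Nat.add_sub_cancel' (hlt j).le]
      have h2 : ∑ k ∈ Finset.range (a j.succ - a j.castSucc),
            x 0 ^ (a j.succ - 1 - (a j.castSucc + k)) * y i ^ (a j.castSucc + k)
          = y i ^ a j.castSucc * ∑ k ∈ Finset.range (a j.succ - a j.castSucc),
            y i ^ k * x 0 ^ (a j.succ - a j.castSucc - 1 - k) := by
        rw [Finset.mul_sum]
        refine Finset.sum_congr rfl fun k _ => ?_
        rw [show a j.succ - 1 - (a j.castSucc + k) = a j.succ - a j.castSucc - 1 - k by omega]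
        ring
      have h3 := geom_sum₂_mul (y i) (x 0) (a j.succ - a j.castSucc)
      rw [h1, h2]
      linear_combination (-y i ^ a j.castSucc) * h3
    have hmono : ∀ b ∈ Fintype.piFinset s, StrictMono b := fun b hb i j hij => by
      have hi := Finset.mem_Ico.1 (Fintype.mem_piFinset.1 hb i)
      have hj := Finset.mem_Ico.1 (Fintype.mem_piFinset.1 hb j)
      have : a i.succ ≤ a j.castSucc := ha.monotone (by
        rw [Fin.le_def]; simpa using hij)
      omega
    have hex : ∀ b : Fin n → ℕ, ∃ Q ∈ P, b ∈ Fintype.piFinset s →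
        (powMatrix y b).det = Q * (Matrix.vandermonde y).det := fun b => by
      by_cases hb : b ∈ Fintype.piFinset s
      · obtain ⟨Q, hQ, h⟩ := ih y (fun i => hx _) b (hmono b hb)
        exact ⟨Q, hQ, fun _ => h⟩
      · exact ⟨0, P.zero_mem, fun h => absurd h hb⟩
    choose q hqP hq using hex
    refine ⟨x 0 ^ a 0 * ∑ b ∈ Fintype.piFinset s, (∏ j, c j (b j)) * q b,
      P.mul_mem (P.pow_mem (hx 0) _) (P.sum_mem fun b _ =>
        P.mul_mem (P.prod_mem fun j _ => P.pow_mem (hx 0) _) (hqP b)), ?_⟩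
    rw [hB, det_of_row_zero B hB0, hfac, Matrix.det_mul_column, det_sum_columns,
      Finset.sum_congr rfl fun b hb => by rw [hq b hb, ← mul_assoc], ← Finset.sum_mul,
      det_vandermonde_succ]
    simp only [B, Matrix.of_apply, Fin.cons_zero]
    ring

/-- The exponents `0, 2, 4, …, 2(n-1), c`. -/
def evensWith (n c : ℕ) (j : Fin (n + 1)) : ℕ := if (j : ℕ) < n then 2 * j else c

lemma det_evensWith_succ {n : ℕ} (c : ℕ) (x : Fin (n + 2) → R) :
    (powMatrix x (evensWith (n + 1) (c + 2))).det
      = x 0 ^ 2 * (powMatrix x (evensWith (n + 1) c)).det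
        + (∏ i : Fin (n + 1), (x i.succ ^ 2 - x 0 ^ 2))
          * (powMatrix (fun i : Fin (n + 1) => x i.succ) (evensWith n c)).det := by
  let A : Matrix (Fin (n + 2)) (Fin (n + 2)) R :=
    (powMatrix x (evensWith (n + 1) (c + 2))).updateCol (Fin.last _)
      fun i => x i ^ (c + 2) - x 0 ^ 2 * x i ^ c
  let B : Matrix (Fin (n + 2)) (Fin (n + 2)) R := Matrix.of fun i =>
    Fin.cons 1 fun j => (x i ^ 2 - x 0 ^ 2) * x i ^ evensWith n c j
  have hA : A.det = (powMatrix x (evensWith (n + 1) (c + 2))).det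
      - x 0 ^ 2 * (powMatrix x (evensWith (n + 1) c)).det := by
    have e1 : (powMatrix x (evensWith (n + 1) (c + 2))).updateCol (Fin.last _)
        (fun i => x i ^ (c + 2)) = powMatrix x (evensWith (n + 1) (c + 2)) := by
      ext i j
      refine Fin.lastCases ?_ (fun j => ?_) j <;> simp [powMatrix, evensWith]
    have e2 : (powMatrix x (evensWith (n + 1) (c + 2))).updateCol (Fin.last _)
        (fun i => x i ^ c) = powMatrix x (evensWith (n + 1) c) := by
      ext i j
      refine Fin.lastCases ?_ (fun j => ?_) j
      · simp [powMatrix, evensWith]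
      · have hj : (j : ℕ) ≤ n := by omega
        simp [powMatrix, evensWith, hj]
    have h := Matrix.det_updateCol_add (powMatrix x (evensWith (n + 1) (c + 2))) (Fin.last _)
      (fun i => x i ^ (c + 2)) (-x 0 ^ 2 • fun i => x i ^ c)
    rw [Matrix.det_updateCol_smul, e1, e2] at h
    have e3 : A = (powMatrix x (evensWith (n + 1) (c + 2))).updateCol (Fin.last _)
      ((fun i => x i ^ (c + 2)) + (-x 0 ^ 2 • fun i => x i ^ c)) := by
      refine congrArg (Matrix.updateCol _ _) ?_
      ext i
      simp [sub_eq_add_neg]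
    rw [e3, h]
    ring
  have hB : A.det = B.det := by
    refine Matrix.det_eq_of_forall_col_eq_smul_add_pred
        (fun j => if (j : ℕ) < n then x 0 ^ 2 else 0) (fun i => ?_) (fun i j => ?_)
    · simp [A, B, powMatrix, evensWith, Fin.ext_iff]
    · by_cases hj : (j : ℕ) < n
      · have h1 : j.succ ≠ Fin.last (n + 1) := by simp [Fin.ext_iff]; omega
        simp [A, B, powMatrix, evensWith, h1, hj, hj.le]
        ring
      · obtain rfl : j = Fin.last n := by ext; simp; omega
        simp [A, B, powMatrix, evensWith]
        ring
  have hfac : (Matrix.of fun i j : Fin (n + 1) => B i.succ j.succ)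
      = Matrix.of fun i j => (x i.succ ^ 2 - x 0 ^ 2) *
          powMatrix (fun i : Fin (n + 1) => x i.succ) (evensWith n c) i j := by
    ext i j
    simp [B, powMatrix]
  have hdet := hA.symm.trans hB
  rw [det_of_row_zero B (by simp [B]), hfac, Matrix.det_mul_column] at hdet
  simp only [B, Matrix.of_apply, Fin.cons_zero, one_mul] at hdet
  linear_combination hdet

lemma det_powMatrix_comp {n : ℕ} (x : Fin n → R) (a : Fin n → ℕ) (σ : Equiv.Perm (Fin n)) :
    (powMatrix x (a ∘ σ)).det = (Equiv.Perm.sign σ : ℤ) * (powMatrix x a).det :=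
  Matrix.det_permute' σ (powMatrix x a)

lemma exists_det_evensWith_eq (P : Subsemiring R) {m : ℕ} (x : Fin (m + 4) → R)
    (hx : ∀ i, x i ∈ P) :
    ∃ Q ∈ P, (powMatrix x (evensWith (m + 3) (2 * m + 1))).det
      = Q * (Matrix.vandermonde x).det := by
  let a : Fin (m + 4) → ℕ := fun j =>
    if (j : ℕ) ≤ m then 2 * j else if (j : ℕ) = m + 3 then 2 * m + 4 else m + j
  have ha : StrictMono a := fun i j hij => by
    simp only [a]
    have := i.2
    have := j.2
    rw [Fin.lt_def] at hij
    split_ifs <;> omega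
  let p : Fin (m + 4) := ⟨m + 1, by omega⟩
  let q : Fin (m + 4) := ⟨m + 2, by omega⟩
  let r : Fin (m + 4) := ⟨m + 3, by omega⟩
  have hpq : p ≠ q := by simp [p, q]
  have hqr : q ≠ r := by simp [q, r]
  have h : evensWith (m + 3) (2 * m + 1) = a ∘ (Equiv.swap p q * Equiv.swap q r) := by
    ext j
    have := j.2
    simp only [Function.comp_apply, Equiv.Perm.mul_apply, Equiv.swap_apply_def, a, evensWith]
    split_ifs <;> simp_all [p, q, r, Fin.ext_iff] <;> omega
  obtain ⟨Q, hQ, hQe⟩ := exists_det_powMatrix_eq P x hx a ha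
  refine ⟨Q, hQ, ?_⟩
  rw [h, det_powMatrix_comp, hQe]
  simp [Equiv.Perm.sign_swap hpq, Equiv.Perm.sign_swap hqr]

lemma exists_staircase_eq (P : Subsemiring R) (m : ℕ) (x : Fin (m + 3) → R)
    (hx : ∀ i, x i ∈ P) :
    ∃ Q ∈ P, (Matrix.vandermonde fun i => x i ^ 2).det
      + (x ⟨m + 1, by omega⟩ * x ⟨m + 2, by omega⟩ ^ 2
          + x ⟨m + 1, by omega⟩ ^ 2 * x ⟨m + 2, by omega⟩)
        * (powMatrix x (evensWith (m + 2) (2 * m + 1))).det = Q * (Matrix.vandermonde x).det := by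
  induction m with
  | zero =>
    refine ⟨(x 1 + x 2) * (x 0 * (x 0 + x 1 + x 2)), P.mul_mem (P.add_mem (hx _) (hx _))
      (P.mul_mem (hx _) (P.add_mem (P.add_mem (hx _) (hx _)) (hx _))), ?_⟩
    simp [Matrix.det_fin_three, powMatrix, evensWith, Matrix.vandermonde_apply]
    ring
  | succ m ih =>
    obtain ⟨Q, hQ, hQe⟩ := ih (fun i => x i.succ) fun i => hx _
    obtain ⟨Q', hQ', hQe'⟩ := exists_det_evensWith_eq P x hx
    have hV := det_vandermonde_succ x
    have hT := det_vandermonde_succ fun i => x i ^ 2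
    have hD := det_evensWith_succ (n := m + 2) (2 * m + 1) x
    have hprod : ∏ i : Fin (m + 3), (x i.succ ^ 2 - x 0 ^ 2)
        = (∏ i : Fin (m + 3), (x i.succ + x 0)) * ∏ i : Fin (m + 3), (x i.succ - x 0) := by
      rw [← Finset.prod_mul_distrib]
      exact Finset.prod_congr rfl fun i _ => by ring
    simp only [Fin.succ_mk] at hQe
    set a := x ⟨m + 1 + 1, by omega⟩
    set b := x ⟨m + 2 + 1, by omega⟩
    have hP : ∀ u ∈ P, ∀ v ∈ P, u * v ^ 2 + u ^ 2 * v ∈ P := fun u hu v hv =>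
      P.add_mem (P.mul_mem hu (P.pow_mem hv _)) (P.mul_mem (P.pow_mem hu _) hv)
    refine ⟨(∏ i : Fin (m + 3), (x i.succ + x 0)) * Q + (a * b ^ 2 + a ^ 2 * b) * (x 0 ^ 2 * Q'),
      P.add_mem (P.mul_mem (P.prod_mem fun i _ => P.add_mem (hx _) (hx _)) hQ)
        (P.mul_mem (hP _ (hx _) _ (hx _)) (P.mul_mem (P.pow_mem (hx _) _) hQ')), ?_⟩
    rw [hprod] at hT hD
    linear_combination hT + (a * b ^ 2 + a ^ 2 * b) * (hD + x 0 ^ 2 * hQe')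
      - (∏ i : Fin (m + 3), (x i.succ + x 0)) * Q * hV
      + ((∏ i : Fin (m + 3), (x i.succ + x 0)) * ∏ i : Fin (m + 3), (x i.succ - x 0)) * hQe

/-- The polynomials with nonnegative integer coefficients. -/
def nonnegCoeff (σ : Type*) : Subsemiring (MvPolynomial σ ℤ) where
  carrier := {p | ∀ m, 0 ≤ p.coeff m}
  zero_mem' m := by simp
  one_mem' m := by
    classical
    rw [coeff_one]
    split_ifs <;> simp
  add_mem' hp hq m := by
    rw [coeff_add]
    exact add_nonneg (hp m) (hq m)
  mul_mem' hp hq m := by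
    classical
    rw [coeff_mul]
    exact Finset.sum_nonneg fun _ _ => mul_nonneg (hp _) (hq _)

lemma X_mem_nonnegCoeff {σ : Type*} (i : σ) : X i ∈ nonnegCoeff σ := fun m => by
  classical
  rw [coeff_X]
  split_ifs <;> simp

end Alternant

/-- For `l ≥ 3`, with `δ = (l-1, l-2, …, 1, 0)` and `α = (l-3, l-3, l-3, l-4, …, 1, 0)`,
the difference `s_δ(x) - (x_{l-1} x_l² + x_{l-1}² x_l) s_α(x)` is a polynomial with nonnegative
coefficients; equivalently (clearing the common Vandermonde denominator of the bialternant
formula), `det(x_i^{δ_j + l-1-j}) - (x_{l-1} x_l² + x_{l-1}² x_l) det(x_i^{α_j + l-1-j})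
= Q · det(x_i^{l-1-j})` for some `Q` with nonnegative coefficients. -/
theorem stmt_7 (l : ℕ) (hl : 3 ≤ l) :
    ∃ Q : MvPolynomial (Fin l) ℤ,
      (∀ m : Fin l →₀ ℕ, 0 ≤ Q.coeff m) ∧
      Matrix.det (Matrix.of fun i j : Fin l =>
            (X i : MvPolynomial (Fin l) ℤ) ^ ((l - 1 - (j : ℕ)) + (l - 1 - (j : ℕ))))
          - (X (⟨l - 2, by omega⟩ : Fin l) * X (⟨l - 1, by omega⟩ : Fin l) ^ 2
              + X (⟨l - 2, by omega⟩ : Fin l) ^ 2 * X (⟨l - 1, by omega⟩ : Fin l))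
            * Matrix.det (Matrix.of fun i j : Fin l =>
                (X i : MvPolynomial (Fin l) ℤ)
                  ^ ((if (j : ℕ) ≤ 2 then l - 3 else l - 1 - (j : ℕ)) + (l - 1 - (j : ℕ))))
        = Q * Matrix.det (Matrix.of fun i j : Fin l =>
            (X i : MvPolynomial (Fin l) ℤ) ^ (l - 1 - (j : ℕ))) := by
  obtain ⟨m, rfl⟩ : ∃ m, l = m + 3 := ⟨l - 3, by omega⟩
  obtain ⟨Q, hQ, h⟩ := Alternant.exists_staircase_eq (Alternant.nonnegCoeff (Fin (m + 3))) m X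
    Alternant.X_mem_nonnegCoeff
  refine ⟨Q, hQ, ?_⟩
  let x : Fin (m + 3) → MvPolynomial (Fin (m + 3)) ℤ := X
  let p : Fin (m + 3) := ⟨m + 1, by omega⟩
  let q : Fin (m + 3) := ⟨m + 2, by omega⟩
  have hpq : p ≠ q := by simp [p, q]
  have h1 := Alternant.det_powMatrix_comp x (fun j => 2 * j) Fin.revPerm
  have h2 := Alternant.det_powMatrix_comp x
    (Alternant.evensWith (m + 2) (2 * m + 1) ∘ Equiv.swap p q) Fin.revPerm
  have h3 := Alternant.det_powMatrix_comp x (fun j => j) Fin.revPerm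
  rw [Alternant.det_powMatrix_comp x _ (Equiv.swap p q), Equiv.Perm.sign_swap hpq] at h2
  have e1 : (fun j : Fin (m + 3) => (m + 3 - 1 - (j : ℕ)) + (m + 3 - 1 - (j : ℕ)))
      = (fun j : Fin (m + 3) => 2 * (j : ℕ)) ∘ Fin.revPerm := by
    ext j
    simp [Fin.val_rev]
    omega
  have e2 : (fun j : Fin (m + 3) =>
        (if (j : ℕ) ≤ 2 then m + 3 - 3 else m + 3 - 1 - (j : ℕ)) + (m + 3 - 1 - (j : ℕ)))
      = (Alternant.evensWith (m + 2) (2 * m + 1) ∘ Equiv.swap p q) ∘ Fin.revPerm := by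
    ext j
    have := j.2
    simp only [Function.comp_apply, Equiv.swap_apply_def, Alternant.evensWith, Fin.revPerm_apply,
      p, q, Fin.ext_iff, Fin.val_rev]
    split_ifs <;> simp_all <;> omega
  have e3 : (fun j : Fin (m + 3) => m + 3 - 1 - (j : ℕ))
      = (fun j : Fin (m + 3) => (j : ℕ)) ∘ Fin.revPerm := by
    ext j
    simp [Fin.val_rev]
  rw [← e1] at h1
  rw [← e2] at h2
  rw [← e3] at h3
  have hT : (Matrix.vandermonde fun i => x i ^ 2)
      = Alternant.powMatrix x fun j => 2 * j := by
    ext1 i j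
    simp [Alternant.powMatrix, Matrix.vandermonde_apply, pow_mul]
  have hV : Matrix.vandermonde x = Alternant.powMatrix x fun j => j := rfl
  change (Matrix.vandermonde fun i => x i ^ 2).det + _ = Q * (Matrix.vandermonde x).det at h
  rw [hT, hV] at h
  change (Alternant.powMatrix x _).det - (x p * x q ^ 2 + x p ^ 2 * x q)
    * (Alternant.powMatrix x _).det = Q * (Alternant.powMatrix x _).det
  rw [h1, h2, h3]
  push_cast
  linear_combination ((Equiv.Perm.sign (Fin.revPerm : Equiv.Perm (Fin (m + 3))) : ℤ) :
    MvPolynomial (Fin (m + 3)) ℤ) * h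
end
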